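/- arXiv:math/0403092 — 6 statements merged into one kernel-verified Lean document; each statement's English description precedes it below -/
import Mathlib

section
/- Let g ≥ 2 be an integer and let B be a bracket of genus g with rational values that has nonnegative degree and satisfies both the string relation and the dilaton relation. Then the formal power series F(q) = Σ_{n≥0} (q^n/n!) · Σ_{(d_1,…,d_n) ∈ ℕ^n, d_1+⋯+d_n ≤ 3g−3+n} B({d_1,…,d_n}) lies in the algebra 𝒜 (the inner sum is over all ordered n-tuples; it is finite by the degree condition, and the n = 0 term is B(∅)). -/
/-- `Y = Σ_{n≥1} (n^{n-1}/n!) qⁿ` as a formal power series over `ℚ`. -/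
noncomputable def Yq : PowerSeries ℚ :=
  PowerSeries.mk fun n => if n = 0 then 0 else (n : ℚ) ^ (n - 1) / n.factorial

/-- `Z = Σ_{n≥1} (nⁿ/n!) qⁿ` as a formal power series over `ℚ`. -/
noncomputable def Zq : PowerSeries ℚ :=
  PowerSeries.mk fun n => if n = 0 then 0 else (n : ℚ) ^ n / n.factorial

/-- A bracket `B` (a function from finite multisets of nonnegative integers to `ℚ`)
satisfies the string relation if
`B(m + {0}) = Σ_{d ∈ m, d ≥ 1} B(m − {d} + {d−1})`,
the sum being over the elements of `m` counted with multiplicity, omitting those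
equal to `0`. -/
def StringRel (B : Multiset ℕ → ℚ) : Prop :=
  ∀ m : Multiset ℕ,
    B (0 ::ₘ m) = (m.map fun d => if d = 0 then 0 else B ((d - 1) ::ₘ m.erase d)).sum

/-- A bracket `B` of genus `g` satisfies the dilaton relation if
`B(m + {1}) = (2g − 2 + |m|)·B(m)` for every finite multiset `m`. -/
def DilatonRel (g : ℕ) (B : Multiset ℕ → ℚ) : Prop :=
  ∀ m : Multiset ℕ, B (1 ::ₘ m) = (2 * (g : ℚ) - 2 + Multiset.card m) * B m

/-- A bracket `B` of genus `g` has nonnegative degree if `B(m) = 0` whenever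
`Σ_{d ∈ m} d > 3g − 3 + |m|`. -/
def NonnegDegree (g : ℕ) (B : Multiset ℕ → ℚ) : Prop :=
  ∀ m : Multiset ℕ, (3 * (g : ℤ) - 3 + Multiset.card m < m.sum) → B m = 0

/-- The linear functional on `ℚ[x₀,x₁,…]` given by the bracket. -/
noncomputable def brL (B : Multiset ℕ → ℚ) : MvPolynomial ℕ ℚ →ₗ[ℚ] ℚ :=
  (MvPolynomial.basisMonomials ℕ ℚ).constr ℚ (fun s => B (Finsupp.toMultiset s))

theorem brL_monomial (B : Multiset ℕ → ℚ) (s : ℕ →₀ ℕ) (c : ℚ) :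
    brL B (MvPolynomial.monomial s c) = c * B (Finsupp.toMultiset s) := by
  have h : MvPolynomial.monomial s c = c • MvPolynomial.basisMonomials ℕ ℚ s := by
    simp [MvPolynomial.smul_monomial]
  rw [h, map_smul, brL, Module.Basis.constr_basis, smul_eq_mul]

theorem brL_prodX (B : Multiset ℕ → ℚ) (n : ℕ) (d : Fin n → ℕ) :
    brL B (∏ i, MvPolynomial.X (d i)) = B (List.ofFn d : Multiset ℕ) := by
  have h : (∏ i, MvPolynomial.X (d i) : MvPolynomial ℕ ℚ)
      = MvPolynomial.monomial (∑ i, Finsupp.single (d i) 1) 1 := by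
    rw [MvPolynomial.monomial_sum_one]; rfl
  rw [h, brL_monomial, one_mul, Finsupp.toMultiset_sum]
  congr 1
  simp only [Finsupp.toMultiset_single, one_smul]
  rw [← Multiset.sum_map_singleton (List.ofFn d : Multiset ℕ)]
  simp [List.sum_ofFn]

/-- The lowering derivation `x_d ↦ x_{d-1}`, `x_0 ↦ 0`. -/
noncomputable def lowD : Derivation ℚ (MvPolynomial ℕ ℚ) (MvPolynomial ℕ ℚ) :=
  MvPolynomial.mkDerivation ℚ (fun d => if d = 0 then 0 else MvPolynomial.X (d - 1))

theorem lowD_X (d : ℕ) :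
    lowD (MvPolynomial.X d) = if d = 0 then 0 else MvPolynomial.X (d - 1) := by
  simp [lowD, MvPolynomial.mkDerivation_X]

theorem brL_string {B : Multiset ℕ → ℚ} (hstr : StringRel B) (p : MvPolynomial ℕ ℚ) :
    brL B (MvPolynomial.X 0 * p) = brL B (lowD p) := by
  induction p using MvPolynomial.induction_on' with
  | add p q hp hq => rw [mul_add, map_add, map_add, map_add, hp, hq]
  | monomial s c =>
    have e1 : (MvPolynomial.X 0 * MvPolynomial.monomial s c : MvPolynomial ℕ ℚ)
        = MvPolynomial.monomial (Finsupp.single 0 1 + s) c := by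
      rw [MvPolynomial.X, MvPolynomial.monomial_mul, one_mul]
    rw [e1, brL_monomial, lowD, MvPolynomial.mkDerivation_monomial, map_smul, smul_eq_mul]
    congr 1
    have e2 : Finsupp.toMultiset (Finsupp.single 0 1 + s) = 0 ::ₘ Finsupp.toMultiset s := by
      rw [Finsupp.toMultiset_add, Finsupp.toMultiset_single, one_smul, Multiset.singleton_add]
    rw [e2, hstr, Finset.sum_multiset_map_count, Finsupp.sum, map_sum,
      Finsupp.toFinset_toMultiset]
    refine Finset.sum_congr rfl fun d hd => ?_
    rw [Finsupp.count_toMultiset]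
    by_cases h0 : d = 0
    · simp [h0]
    · rw [if_neg h0, if_neg h0, smul_eq_mul, MvPolynomial.X, MvPolynomial.monomial_mul, mul_one,
        brL_monomial, nsmul_eq_mul]
      congr 2
      rw [Finsupp.toMultiset_add, Finsupp.toMultiset_single, one_smul, add_comm,
        Multiset.singleton_add]
      congr 1
      ext a
      rw [Finsupp.count_toMultiset]
      by_cases ha : a = d
      · subst ha; simp
      · rw [Multiset.count_erase_of_ne ha]; simp [Ne.symm ha]

theorem brL_dilaton {g : ℕ} {B : Multiset ℕ → ℚ} (hdil : DilatonRel g B) (k : ℕ)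
    (p : MvPolynomial ℕ ℚ) (hp : p.IsHomogeneous k) :
    brL B (MvPolynomial.X 1 * p) = (2 * (g : ℚ) - 2 + k) * brL B p := by
  conv_lhs => rw [p.as_sum]
  conv_rhs => rw [p.as_sum]
  rw [Finset.mul_sum, map_sum, map_sum, Finset.mul_sum]
  refine Finset.sum_congr rfl fun s hs => ?_
  have e1 : (MvPolynomial.X 1 * MvPolynomial.monomial s (p.coeff s) : MvPolynomial ℕ ℚ)
      = MvPolynomial.monomial (Finsupp.single 1 1 + s) (p.coeff s) := by
    rw [MvPolynomial.X, MvPolynomial.monomial_mul, one_mul]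
  have hc : Multiset.card (Finsupp.toMultiset s) = k := by
    rw [Finsupp.card_toMultiset]
    have := hp (MvPolynomial.mem_support_iff.1 hs)
    rw [← this]
    simp [Finsupp.weight_apply, Finsupp.sum]
  rw [e1, brL_monomial, brL_monomial, Finsupp.toMultiset_add, Finsupp.toMultiset_single, one_smul,
    Multiset.singleton_add, hdil, hc]
  ring

/-- `Σ (dᵢ - 1)` of a monomial. -/
noncomputable def wtv (s : ℕ →₀ ℕ) : ℤ :=
  ((Finsupp.toMultiset s).sum : ℤ) - Multiset.card (Finsupp.toMultiset s)

theorem wtv_add (s t : ℕ →₀ ℕ) : wtv (s + t) = wtv s + wtv t := by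
  simp only [wtv, Finsupp.toMultiset_add, Multiset.sum_add, Multiset.card_add]
  push_cast
  ring

/-- Polynomials all of whose monomials have `Σ (dᵢ - 1) ≥ k`. -/
noncomputable def Vg (k : ℤ) : Submodule ℚ (MvPolynomial ℕ ℚ) :=
  MvPolynomial.restrictSupport ℚ {s | k ≤ wtv s}

theorem mem_Vg (k : ℤ) (p : MvPolynomial ℕ ℚ) : p ∈ Vg k ↔ ∀ s ∈ p.support, k ≤ wtv s := by
  rw [Vg, MvPolynomial.mem_restrictSupport_iff]; rfl

theorem Vg_mono {k l : ℤ} (h : l ≤ k) {p : MvPolynomial ℕ ℚ} (hp : p ∈ Vg k) : p ∈ Vg l := by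
  rw [mem_Vg] at *
  exact fun s hs => h.trans (hp s hs)

theorem Vg_mul {k l : ℤ} {p q : MvPolynomial ℕ ℚ} (hp : p ∈ Vg k) (hq : q ∈ Vg l) :
    p * q ∈ Vg (k + l) := by
  classical
  rw [mem_Vg] at *
  intro s hs
  obtain ⟨a, ha, b, hb, rfl⟩ := Finset.mem_add.1 (MvPolynomial.support_mul p q hs)
  rw [wtv_add]
  exact add_le_add (hp a ha) (hq b hb)

theorem Vg_one : (1 : MvPolynomial ℕ ℚ) ∈ Vg 0 := by
  rw [mem_Vg]
  intro s hs
  have : s = 0 := by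
    by_contra h
    rw [MvPolynomial.mem_support_iff, MvPolynomial.coeff_one, if_neg (Ne.symm h)] at hs
    exact hs rfl
  simp [this, wtv]

theorem Vg_X (d : ℕ) : (MvPolynomial.X d : MvPolynomial ℕ ℚ) ∈ Vg ((d : ℤ) - 1) := by
  rw [mem_Vg]
  intro s hs
  rw [MvPolynomial.support_X, Finset.mem_singleton] at hs
  subst hs
  simp [wtv]

theorem Vg_pow {k : ℤ} {p : MvPolynomial ℕ ℚ} (hp : p ∈ Vg k) (n : ℕ) :
    p ^ n ∈ Vg (n * k) := by
  induction n with
  | zero => simpa using Vg_one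
  | succ n ih =>
    rw [pow_succ]
    refine Vg_mono (le_of_eq ?_) (Vg_mul ih hp)
    push_cast; ring

theorem brL_Vg {g : ℕ} {B : Multiset ℕ → ℚ} (hdeg : NonnegDegree g B)
    {p : MvPolynomial ℕ ℚ} (hp : p ∈ Vg (3 * (g : ℤ) - 2)) : brL B p = 0 := by
  rw [mem_Vg] at hp
  rw [p.as_sum, map_sum]
  refine Finset.sum_eq_zero fun s hs => ?_
  rw [brL_monomial, hdeg, mul_zero]
  have := hp s hs
  rw [wtv] at this
  push_cast at this ⊢
  linarith

/-- `e_M = Σ_{d<M} x_d`. -/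
noncomputable def eM (M : ℕ) : MvPolynomial ℕ ℚ := ∑ d ∈ Finset.range M, MvPolynomial.X d

/-- `f_M = Σ_{2≤d<M+2} x_d`. -/
noncomputable def fM (M : ℕ) : MvPolynomial ℕ ℚ := ∑ d ∈ Finset.range M, MvPolynomial.X (d + 2)

theorem eM_fM (M : ℕ) : eM (M + 2) = MvPolynomial.X 0 + (MvPolynomial.X 1 + fM M) := by
  rw [eM, fM, Finset.sum_range_succ', Finset.sum_range_succ']
  ring

theorem lowD_eM (M : ℕ) : lowD (eM (M + 1)) = eM M := by
  rw [eM, Finset.sum_range_succ', map_add, map_sum]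
  simp [lowD_X, eM]

theorem eM_mem (M : ℕ) : eM M ∈ Vg (-1) := by
  refine Submodule.sum_mem _ fun d _ => Vg_mono ?_ (Vg_X d)
  linarith [Int.natCast_nonneg d]

theorem fM_mem (M : ℕ) : fM M ∈ Vg 1 := by
  refine Submodule.sum_mem _ fun d _ => Vg_mono ?_ (Vg_X (d + 2))
  push_cast
  linarith [Int.natCast_nonneg d]

theorem fM_hom (M : ℕ) : (fM M).IsHomogeneous 1 :=
  MvPolynomial.IsHomogeneous.sum _ _ _ fun _ _ => MvPolynomial.isHomogeneous_X _ _

/-- Repeated string relation. -/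
theorem string_iter {g : ℕ} {B : Multiset ℕ → ℚ} (hdeg : NonnegDegree g B) (hstr : StringRel B)
    (M n j : ℕ) (hM : 3 * g + n + j ≤ M) :
    brL B (MvPolynomial.X 0 ^ j * eM (M + 1) ^ n) = (n : ℚ) ^ j * brL B (eM (M + 1) ^ n) := by
  induction j with
  | zero => simp
  | succ j ih =>
    have hx : lowD ((MvPolynomial.X 0 : MvPolynomial ℕ ℚ) ^ j) = 0 := by
      rw [Derivation.leibniz_pow, lowD_X]; simp
    rw [pow_succ', mul_assoc, brL_string hstr, Derivation.leibniz, hx, smul_zero, add_zero,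
      Derivation.leibniz_pow, lowD_eM]
    cases n with
    | zero => simp
    | succ n =>
      have e : (eM M : MvPolynomial ℕ ℚ) = eM (M + 1) - MvPolynomial.X M := by
        simp [eM, Finset.sum_range_succ]
      have hz : brL B (MvPolynomial.X 0 ^ j * (eM (M + 1) ^ n * MvPolynomial.X M)) = 0 := by
        apply brL_Vg hdeg
        refine Vg_mono ?_ (Vg_mul (Vg_pow (Vg_X 0) j) (Vg_mul (Vg_pow (eM_mem (M + 1)) n) (Vg_X M)))
        push_cast
        zify at hM
        linarith
      have e3 : (MvPolynomial.X 0 ^ j : MvPolynomial ℕ ℚ) •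
          ((n + 1) • (eM (M + 1) ^ (n + 1 - 1) • eM M))
          = ((n : ℚ) + 1) • (MvPolynomial.X 0 ^ j * eM (M + 1) ^ (n + 1)
            - MvPolynomial.X 0 ^ j * (eM (M + 1) ^ n * MvPolynomial.X M)) := by
        rw [e, MvPolynomial.smul_eq_C_mul]
        simp only [smul_eq_mul, nsmul_eq_mul, add_tsub_cancel_right, map_add, map_one, map_natCast]
        push_cast
        ring
      rw [e3, map_smul, map_sub, hz, sub_zero, ih (by omega), smul_eq_mul]
      push_cast
      ring

/-- Repeated dilaton relation. -/
theorem dilaton_iter {g : ℕ} {B : Multiset ℕ → ℚ} (hg : 2 ≤ g) (hdil : DilatonRel g B)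
    (M k b : ℕ) :
    brL B (MvPolynomial.X 1 ^ b * fM M ^ k) =
      (b.factorial : ℚ) * ((2 * g - 3 + k + b).choose (2 * g - 3 + k) : ℚ) * brL B (fM M ^ k) := by
  induction b with
  | zero => simp
  | succ b ih =>
    have hh : (MvPolynomial.X 1 ^ b * fM M ^ k : MvPolynomial ℕ ℚ).IsHomogeneous (b + k) := by
      have := ((MvPolynomial.isHomogeneous_X ℚ (1 : ℕ)).pow b).mul ((fM_hom M).pow k)
      simpa using this
    rw [pow_succ', mul_assoc, brL_dilaton hdil _ _ hh, ih, ← mul_assoc]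
    congr 1
    obtain ⟨h, rfl⟩ := Nat.exists_eq_add_of_le hg
    have e : 2 * (2 + h) - 3 + k = 2 * h + 1 + k := by omega
    rw [e]
    have key := Nat.add_one_mul_choose_eq (2 * h + 1 + k + b) b
    have s1 : (2 * h + 1 + k + b).choose (2 * h + 1 + k) = (2 * h + 1 + k + b).choose b :=
      Nat.choose_symm_add
    have s2 : (2 * h + 1 + k + (b + 1)).choose (2 * h + 1 + k)
        = (2 * h + 1 + k + (b + 1)).choose (b + 1) :=
      Nat.choose_symm_add
    rw [s1, s2, Nat.factorial_succ]
    have key' := congrArg (Nat.cast : ℕ → ℚ) key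
    push_cast at key' ⊢
    rw [← add_assoc]
    linear_combination (b.factorial : ℚ) * key'

theorem fM_stable {g : ℕ} {B : Multiset ℕ → ℚ} (hdeg : NonnegDegree g B) (M k : ℕ)
    (hM : 3 * g ≤ M) : brL B (fM M ^ k) = brL B (fM (3 * g) ^ k) := by
  have hd : fM M - fM (3 * g) ∈ Vg (3 * (g : ℤ) - 2) := by
    obtain ⟨r, rfl⟩ := Nat.exists_eq_add_of_le hM
    rw [fM, fM, Finset.sum_range_add, add_sub_cancel_left]
    refine Submodule.sum_mem _ fun d _ => Vg_mono ?_ (Vg_X _)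
    push_cast
    linarith [Int.natCast_nonneg d]
  have h0 : ∀ N, fM N ∈ Vg 0 := fun N => Vg_mono (by norm_num) (fM_mem N)
  have hk : fM M ^ k - fM (3 * g) ^ k ∈ Vg (3 * (g : ℤ) - 2) := by
    induction k with
    | zero => simp
    | succ k ih =>
      have : fM M ^ (k + 1) - fM (3 * g) ^ (k + 1)
          = fM M * (fM M ^ k - fM (3 * g) ^ k) + (fM M - fM (3 * g)) * fM (3 * g) ^ k := by ring
      rw [this]
      refine Submodule.add_mem _ (Vg_mono (by simp) (Vg_mul (h0 M) ih))
        (Vg_mono (by simp) (Vg_mul hd (Vg_pow (h0 _) k)))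
  have := brL_Vg hdeg hk
  rw [map_sub] at this
  linarith

theorem fM_vanish {g : ℕ} {B : Multiset ℕ → ℚ} (hdeg : NonnegDegree g B) (M k : ℕ)
    (hk : 3 * g - 2 ≤ k) : brL B (fM M ^ k) = 0 := by
  apply brL_Vg hdeg
  refine Vg_mono ?_ (Vg_pow (fM_mem M) k)
  omega

/-- the inner sum as `L(e_M^n)`. -/
theorem bracket_inner_sum {g : ℕ} (hg : 2 ≤ g) {B : Multiset ℕ → ℚ} (hdeg : NonnegDegree g B) (M n : ℕ)
    (hM : 3 * g + n ≤ M) :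
    ∑ d ∈ (Fintype.piFinset fun _ : Fin n =>
              Finset.range (3 * g - 3 + n + 1)).filter
              (fun d => ∑ i, d i ≤ 3 * g - 3 + n),
            B (List.ofFn d : Multiset ℕ) = brL B (eM M ^ n) := by
  have e : eM M ^ n = ∑ d ∈ Fintype.piFinset fun _ : Fin n => Finset.range M,
      ∏ i, (MvPolynomial.X (d i) : MvPolynomial ℕ ℚ) := by
    rw [← Finset.prod_univ_sum]; simp [eM]
  rw [e, map_sum]
  simp only [brL_prodX]
  refine Finset.sum_subset ?_ ?_
  · intro d hd
    simp only [Finset.mem_filter, Fintype.mem_piFinset, Finset.mem_range] at hd ⊢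
    intro i
    have := hd.1 i
    omega
  · intro d _ hd
    apply hdeg
    simp only [Finset.mem_filter, Fintype.mem_piFinset, Finset.mem_range, not_and] at hd
    have hlt : 3 * g - 3 + n < ∑ i, d i := by
      by_contra hcon
      have hle : ∑ i, d i ≤ 3 * g - 3 + n := by omega
      refine hd (fun i => ?_) hle
      have := Finset.single_le_sum (f := d) (fun _ _ => Nat.zero_le _) (Finset.mem_univ i)
      omega
    simp only [Multiset.coe_card, List.length_ofFn, Multiset.sum_coe, List.sum_ofFn]
    omega

/-- `h = q e^{-q}`. -/
noncomputable def hq : PowerSeries ℚ :=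
  PowerSeries.X * PowerSeries.rescale (-1 : ℚ) (PowerSeries.exp ℚ)

theorem hq_subst : PowerSeries.HasSubst hq :=
  PowerSeries.HasSubst.of_constantCoeff_zero' (by simp [hq])

theorem coeff_hq_pow (n c : ℕ) : PowerSeries.coeff c (hq ^ n) =
    if n ≤ c then (-(n : ℚ)) ^ (c - n) / (c - n).factorial else 0 := by
  rw [hq, mul_pow, ← map_pow, PowerSeries.exp_pow_eq_rescale_exp, PowerSeries.coeff_X_pow_mul']
  split_ifs with h
  · rw [PowerSeries.coeff_rescale, PowerSeries.coeff_rescale, PowerSeries.coeff_exp, neg_pow (n : ℚ)]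
    simp
    ring
  · rfl

theorem coeff_T (F : PowerSeries ℚ) (c : ℕ) : PowerSeries.coeff c (F.subst hq) =
    ∑ n ∈ Finset.range (c + 1), PowerSeries.coeff n F * ((-(n : ℚ)) ^ (c - n) / (c - n).factorial) := by
  rw [PowerSeries.coeff_subst' hq_subst, finsum_eq_sum_of_support_subset (s := Finset.range (c + 1))]
  · refine Finset.sum_congr rfl fun n hn => ?_
    rw [coeff_hq_pow, if_pos (by simpa [Nat.lt_succ_iff] using hn), smul_eq_mul]
  · intro n hn
    by_contra hcon
    apply hn
    simp only [Finset.coe_range, Set.mem_Iio, not_lt] at hcon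
    simp only [coeff_hq_pow]
    rw [if_neg (by omega), smul_zero]

theorem T_inj {F G : PowerSeries ℚ} (h : F.subst hq = G.subst hq) : F = G := by
  ext n
  induction n using Nat.strong_induction_on with
  | _ n ih =>
    have := congrArg (PowerSeries.coeff n) h
    rw [coeff_T, coeff_T, Finset.sum_range_succ, Finset.sum_range_succ,
      Finset.sum_congr rfl (fun m hm => by rw [ih m (Finset.mem_range.1 hm)])] at this
    simpa using this

theorem T_Z : Zq.subst hq = PowerSeries.X * PowerSeries.mk (1 : ℕ → ℚ) := by
  ext c
  rw [coeff_T]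
  cases c with
  | zero => simp [Zq]
  | succ c =>
    rw [PowerSeries.coeff_succ_X_mul, PowerSeries.coeff_mk, Pi.one_apply]
    have key := fwdDiff_iter_eq_factorial (R := ℚ) (n := c + 1)
    have key2 := congrFun key 0
    rw [fwdDiff_iter_eq_sum_shift] at key2
    have hf : ((c + 1).factorial : ℚ) ≠ 0 := by positivity
    have : ∀ n ∈ Finset.range (c + 1 + 1), PowerSeries.coeff n Zq *
        ((-(n : ℚ)) ^ (c + 1 - n) / (c + 1 - n).factorial)
        = (((-1 : ℤ) ^ (c + 1 - n) * (c + 1).choose n) • ((0 : ℚ) + n • 1) ^ (c + 1))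
          / (c + 1).factorial := by
      intro n hn
      have hn' : n ≤ c + 1 := by simpa [Nat.lt_succ_iff] using hn
      rw [Zq, PowerSeries.coeff_mk]
      by_cases h0 : n = 0
      · simp [h0]
      · rw [if_neg h0, zsmul_eq_mul]
        push_cast
        rw [Nat.cast_choose ℚ hn', neg_pow (n : ℚ), nsmul_eq_mul, mul_one, zero_add]
        have e : (n : ℚ) ^ (c + 1) = (n : ℚ) ^ n * (n : ℚ) ^ (c + 1 - n) := by
          rw [← pow_add]; congr 1; omega
        rw [e]
        field_simp
    rw [Finset.sum_congr rfl this, ← Finset.sum_div, key2]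
    simp [hf]

theorem T_pow {g : ℕ} (hg : 2 ≤ g) (k c : ℕ) :
    PowerSeries.coeff c ((Zq ^ k * (1 + Zq) ^ (2 * g - 2)).subst hq) =
      if k ≤ c then ((2 * g - 3 + k + (c - k)).choose (2 * g - 3 + k) : ℚ) else 0 := by
  have h1 : (1 + PowerSeries.X * PowerSeries.mk (1 : ℕ → ℚ)) = PowerSeries.mk (1 : ℕ → ℚ) := by
    ext n
    cases n <;> simp [PowerSeries.coeff_succ_X_mul, PowerSeries.coeff_one]
  have h2 : (1 + Zq).subst hq = PowerSeries.mk (1 : ℕ → ℚ) := by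
    rw [PowerSeries.subst_add hq_subst, T_Z, ← h1]
    congr 1
    · rw [← PowerSeries.coe_substAlgHom hq_subst, map_one]
    · rw [h1]
  rw [PowerSeries.subst_mul hq_subst, PowerSeries.subst_pow hq_subst,
    PowerSeries.subst_pow hq_subst, T_Z, h2, mul_pow, mul_assoc, ← pow_add,
    PowerSeries.coeff_X_pow_mul']
  have e : k + (2 * g - 2) = (2 * g - 3 + k) + 1 := by omega
  rw [e, PowerSeries.mk_one_pow_eq_mk_choose_add, PowerSeries.coeff_mk]

/-- First step: removing the zeros through the string relation. -/
theorem T_bracket {g : ℕ} (hg : 2 ≤ g) {B : Multiset ℕ → ℚ}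
    (hdeg : NonnegDegree g B) (hstr : StringRel B) (c : ℕ) :
    PowerSeries.coeff c ((PowerSeries.mk fun n =>
        (1 / (n.factorial : ℚ)) *
          ∑ d ∈ (Fintype.piFinset fun _ : Fin n =>
              Finset.range (3 * g - 3 + n + 1)).filter
              (fun d => ∑ i, d i ≤ 3 * g - 3 + n),
            B (List.ofFn d : Multiset ℕ)).subst hq) =
      brL B ((fM (3 * g + c) + MvPolynomial.X 1) ^ c) / c.factorial := by
  have hx : fM (3 * g + c) + MvPolynomial.X 1
      = eM (3 * g + c + 1 + 1) + (-MvPolynomial.X 0) := by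
    rw [eM_fM]; ring
  rw [hx, add_pow, map_sum, Finset.sum_div, coeff_T]
  refine Finset.sum_congr rfl fun n hn => ?_
  have hn' : n ≤ c := by simpa [Nat.lt_succ_iff] using hn
  rw [PowerSeries.coeff_mk, bracket_inner_sum hg hdeg (3 * g + c + 1 + 1) n (by omega)]
  have e : (eM (3 * g + c + 1 + 1) ^ n * (-MvPolynomial.X 0) ^ (c - n) * (c.choose n : MvPolynomial ℕ ℚ))
      = ((-1 : ℚ) ^ (c - n) * (c.choose n : ℚ)) •
        (MvPolynomial.X 0 ^ (c - n) * eM (3 * g + c + 1 + 1) ^ n) := by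
    rw [MvPolynomial.smul_eq_C_mul, neg_pow]
    simp only [map_mul, map_pow, map_neg, map_one, map_natCast]
    ring
  rw [e, map_smul, string_iter hdeg hstr _ _ _ (by omega), smul_eq_mul, Nat.cast_choose ℚ hn',
    neg_pow (n : ℚ)]
  have : (c.factorial : ℚ) ≠ 0 := by positivity
  field_simp

/-- Second step: removing the ones through the dilaton relation. -/
theorem dilaton_expand {g : ℕ} (hg : 2 ≤ g) {B : Multiset ℕ → ℚ}
    (hdeg : NonnegDegree g B) (hdil : DilatonRel g B) (c : ℕ) :
    brL B ((fM (3 * g + c) + MvPolynomial.X 1) ^ c) / c.factorial =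
      ∑ k ∈ Finset.range (c + 1), brL B (fM (3 * g) ^ k) / k.factorial *
        ((2 * g - 3 + k + (c - k)).choose (2 * g - 3 + k) : ℚ) := by
  rw [add_pow, map_sum, Finset.sum_div]
  refine Finset.sum_congr rfl fun k hk => ?_
  have hk' : k ≤ c := by simpa [Nat.lt_succ_iff] using hk
  have e : (fM (3 * g + c) ^ k * MvPolynomial.X 1 ^ (c - k) * (c.choose k : MvPolynomial ℕ ℚ))
      = (c.choose k : ℚ) • (MvPolynomial.X 1 ^ (c - k) * fM (3 * g + c) ^ k) := by
    rw [MvPolynomial.smul_eq_C_mul]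
    simp only [map_natCast]
    ring
  rw [e, map_smul, dilaton_iter hg hdil, fM_stable hdeg _ k (by omega), smul_eq_mul,
    Nat.cast_choose ℚ hk']
  have : (c.factorial : ℚ) ≠ 0 := by positivity
  field_simp

/-- For a genus `g ≥ 2` bracket `B` of nonnegative degree satisfying the string and
dilaton relations, the series
`F(q) = Σ_{n≥0} (qⁿ/n!) Σ_{(d₁,…,dₙ) ∈ ℕⁿ, Σdᵢ ≤ 3g−3+n} B({d₁,…,dₙ})`
lies in the algebra `𝒜 = ℚ[Y,Z]`.  (The inner sum is over ordered `n`-tuples; since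
`Σdᵢ ≤ 3g−3+n` forces each `dᵢ ≤ 3g−3+n`, it is encoded as a finite sum.) -/
theorem bracket_series_mem_adjoin (g : ℕ) (hg : 2 ≤ g) (B : Multiset ℕ → ℚ)
    (hdeg : NonnegDegree g B) (hstr : StringRel B) (hdil : DilatonRel g B) :
    (PowerSeries.mk fun n =>
        (1 / (n.factorial : ℚ)) *
          ∑ d ∈ (Fintype.piFinset fun _ : Fin n =>
              Finset.range (3 * g - 3 + n + 1)).filter
              (fun d => ∑ i, d i ≤ 3 * g - 3 + n),
            B (List.ofFn d : Multiset ℕ)) ∈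
      Algebra.adjoin ℚ {Yq, Zq} := by
  have key : (PowerSeries.mk fun n =>
        (1 / (n.factorial : ℚ)) *
          ∑ d ∈ (Fintype.piFinset fun _ : Fin n =>
              Finset.range (3 * g - 3 + n + 1)).filter
              (fun d => ∑ i, d i ≤ 3 * g - 3 + n),
            B (List.ofFn d : Multiset ℕ)) =
      ∑ k ∈ Finset.range (3 * g - 2), (brL B (fM (3 * g) ^ k) / k.factorial) •
        (Zq ^ k * (1 + Zq) ^ (2 * g - 2)) := by
    apply T_inj
    ext c
    rw [T_bracket hg hdeg hstr, dilaton_expand hg hdeg hdil]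
    have hR : (∑ k ∈ Finset.range (3 * g - 2), (brL B (fM (3 * g) ^ k) / k.factorial) •
        (Zq ^ k * (1 + Zq) ^ (2 * g - 2))).subst hq
        = ∑ k ∈ Finset.range (3 * g - 2), (brL B (fM (3 * g) ^ k) / k.factorial) •
        (Zq ^ k * (1 + Zq) ^ (2 * g - 2)).subst hq := by
      rw [← PowerSeries.coe_substAlgHom hq_subst, map_sum]
      refine Finset.sum_congr rfl fun k _ => ?_
      rw [PowerSeries.coe_substAlgHom hq_subst, PowerSeries.subst_smul hq_subst]
    rw [hR, map_sum]
    simp only [PowerSeries.coeff_smul, T_pow hg, smul_eq_mul]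
    have hA : ∑ k ∈ Finset.range (c + 1), brL B (fM (3 * g) ^ k) / k.factorial *
        ((2 * g - 3 + k + (c - k)).choose (2 * g - 3 + k) : ℚ)
        = ∑ k ∈ Finset.range (c + 1 + (3 * g - 2)), brL B (fM (3 * g) ^ k) / k.factorial *
        (if k ≤ c then ((2 * g - 3 + k + (c - k)).choose (2 * g - 3 + k) : ℚ) else 0) := by
      rw [← Finset.sum_subset (Finset.range_mono (show c + 1 ≤ c + 1 + (3 * g - 2) by omega))]
      · refine Finset.sum_congr rfl fun k hk => ?_
        rw [if_pos (by simpa [Nat.lt_succ_iff] using hk)]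
      · intro k _ hk
        rw [if_neg (by simpa [Nat.lt_succ_iff] using hk), mul_zero]
    rw [hA]
    symm
    refine Finset.sum_subset (Finset.range_mono (by omega)) fun k _ hk => ?_
    rw [fM_vanish hdeg _ k (by simpa using hk), zero_div, zero_mul]
  rw [key]
  have hZ : Zq ∈ Algebra.adjoin ℚ {Yq, Zq} := Algebra.subset_adjoin (by simp)
  exact Subalgebra.sum_mem _ fun k _ => Subalgebra.smul_mem _
    (Subalgebra.mul_mem _ (Subalgebra.pow_mem _ hZ k)
      (Subalgebra.pow_mem _ (Subalgebra.add_mem _ (Subalgebra.one_mem _) hZ) _)) _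
end

section
/- Let g ≥ 2 and p ≥ 0 be integers, and let B be a bracket of genus g with rational values that has nonnegative degree and satisfies the string relation and the dilaton relation for every multiset of cardinality ≥ p. Let b_1, …, b_p be positive integers and set r = Σ_{i=1}^p (b_i − 1). Then the formal power series F(q) = Σ_{n ≥ p+r} (q^n/(n−p−r)!) · Σ_{(d_1,…,d_{n−r}) ∈ ℕ^{n−r}, d_1+⋯+d_{n−r} ≤ 3g−3+(n−r)} b_1^{d_1} ⋯ b_p^{d_p} · B({d_1,…,d_{n−r}}) lies in the algebra 𝒜. -/
/-- A bracket `B` satisfies the string relation at the multiset `m` if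
`B(m + {0}) = Σ_{d ∈ m, d ≥ 1} B(m − {d} + {d−1})`, the sum being over the elements
of `m` counted with multiplicity, omitting those equal to `0`. -/
def StringRelAt (B : Multiset ℕ → ℚ) (m : Multiset ℕ) : Prop :=
  B (0 ::ₘ m) = (m.map fun d => if d = 0 then 0 else B ((d - 1) ::ₘ m.erase d)).sum

/-- A bracket `B` of genus `g` satisfies the dilaton relation at the multiset `m` if
`B(m + {1}) = (2g − 2 + |m|)·B(m)`. -/
def DilatonRelAt (g : ℕ) (B : Multiset ℕ → ℚ) (m : Multiset ℕ) : Prop :=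
  B (1 ::ₘ m) = (2 * (g : ℚ) - 2 + Multiset.card m) * B m

namespace BracketAux

open PowerSeries Finset

/-- The series `u * exp (-u)`. -/
noncomputable def wS : PowerSeries ℚ := X * rescale (-1 : ℚ) (PowerSeries.exp ℚ)

lemma wS_hasSubst : HasSubst wS := by
  apply HasSubst.of_constantCoeff_zero'
  simp [wS]

lemma coeff_wS_pow (n N : ℕ) :
    coeff N (wS ^ n) = if n ≤ N then (-(n : ℚ)) ^ (N - n) / (N - n).factorial else 0 := by
  rw [wS, mul_pow, ← map_pow, exp_pow_eq_rescale_exp, coeff_X_pow_mul']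
  split_ifs with h
  · simp only [coeff_rescale, coeff_exp]
    rw [neg_pow (n : ℚ)]
    simp
    ring
  · rfl

lemma coeff_subst_wS (F : PowerSeries ℚ) (N : ℕ) :
    coeff N (F.subst wS) =
      ∑ n ∈ range (N + 1), coeff n F * ((-(n : ℚ)) ^ (N - n) / (N - n).factorial) := by
  rw [coeff_subst' wS_hasSubst]
  rw [finsum_eq_sum_of_support_subset (s := range (N + 1))]
  · apply sum_congr rfl
    intro n hn
    rw [coeff_wS_pow, if_pos (by simpa [Nat.lt_succ_iff] using hn), smul_eq_mul]
  · intro n hn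
    simp only [coeff_wS_pow, Function.mem_support] at hn
    simp only [coe_range, Set.mem_Iio]
    by_contra h
    apply hn
    rw [if_neg (by omega), smul_zero]

lemma subst_wS_injective {F G : PowerSeries ℚ} (h : F.subst wS = G.subst wS) : F = G := by
  ext N
  induction N using Nat.strong_induction_on with
  | _ N ih =>
    have h1 := congrArg (coeff N) h
    rw [coeff_subst_wS, coeff_subst_wS, sum_range_succ, sum_range_succ] at h1
    have h2 : ∑ n ∈ range N, coeff n F * ((-(n : ℚ)) ^ (N - n) / (N - n).factorial) =
        ∑ n ∈ range N, coeff n G * ((-(n : ℚ)) ^ (N - n) / (N - n).factorial) := by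
      apply sum_congr rfl
      intro n hn
      rw [ih n (mem_range.mp hn)]
    rw [h2] at h1
    simpa using h1

lemma diff_sum (N j : ℕ) :
    ∑ n ∈ range (N + 1), (-1 : ℚ) ^ (N - n) * N.choose n * (n : ℚ) ^ j =
      ((fwdDiff (1 : ℚ))^[N] (fun r : ℚ => r ^ j)) 0 := by
  rw [fwdDiff_iter_eq_sum_shift]
  apply sum_congr rfl
  intro n hn
  simp

lemma term_id (N n j : ℕ) (hn : n ≤ N) (e : ℕ) (he : e + (N - n) = j) :
    (n : ℚ) ^ e / n.factorial * ((-(n : ℚ)) ^ (N - n) / (N - n).factorial) =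
      ((-1 : ℚ) ^ (N - n) * N.choose n * (n : ℚ) ^ j) / N.factorial := by
  rw [Nat.cast_choose ℚ hn, neg_pow, ← he, pow_add]
  have := Nat.factorial_ne_zero N
  have := Nat.factorial_ne_zero n
  have := Nat.factorial_ne_zero (N - n)
  field_simp

lemma subst_Y : Yq.subst wS = X := by
  ext N
  rw [coeff_subst_wS, coeff_X]
  rcases N with _ | N
  · simp [Yq]
  have h1 : ∑ n ∈ range (N + 1 + 1), coeff n Yq *
      ((-(n : ℚ)) ^ (N + 1 - n) / (N + 1 - n).factorial) =
      (∑ n ∈ range (N + 1 + 1), (-1 : ℚ) ^ (N + 1 - n) * (N + 1).choose n * (n : ℚ) ^ N -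
        (if N = 0 then (-1) else 0)) / (N + 1).factorial := by
    rw [sum_range_succ', sum_range_succ' (n := N + 1)]
    have h0 : coeff 0 Yq = 0 := by simp [Yq]
    rw [h0, zero_mul, add_zero]
    have h2 : (-1 : ℚ) ^ (N + 1 - 0) * (N + 1).choose 0 * ((0 : ℕ) : ℚ) ^ N
        = if N = 0 then (-1) else 0 := by
      split_ifs with h
      · subst h; simp
      · simp [h]
    rw [h2, add_sub_cancel_right, sum_div]
    apply sum_congr rfl
    intro n hn
    have hn' := mem_range.mp hn
    rw [← term_id (N + 1) (n + 1) N (by omega) n (by omega)]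
    simp [Yq]
  rw [h1, diff_sum, fwdDiff_iter_pow_eq_zero_of_lt (Nat.lt_succ_self N)]
  rcases N with _ | N <;> simp

lemma subst_Z : (1 + Zq).subst wS = PowerSeries.mk 1 := by
  ext N
  rw [coeff_subst_wS]
  have hc : ∀ n, coeff n (1 + Zq) = (n : ℚ) ^ n / n.factorial := by
    intro n
    rcases n with _ | n <;> simp [Zq, coeff_one]
  have h1 : ∑ n ∈ range (N + 1), coeff n (1 + Zq) *
      ((-(n : ℚ)) ^ (N - n) / (N - n).factorial) =
      (∑ n ∈ range (N + 1), (-1 : ℚ) ^ (N - n) * N.choose n * (n : ℚ) ^ N) / N.factorial := by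
    rw [sum_div]
    apply sum_congr rfl
    intro n hn
    have hn' := mem_range.mp hn
    rw [hc, term_id N n N (by omega) n (by omega)]
  rw [h1, diff_sum, fwdDiff_iter_eq_factorial]
  have := Nat.factorial_ne_zero N
  simp [this]

/-- Purely formal part: from the numbers `c`, `a`, `h` related by the string and dilaton
binomial identities, the series lies in the algebra. -/
lemma series_part (β M T : ℕ) (hM : 0 < M) (c a h : ℕ → ℚ)
    (ha : ∀ N, a N = ∑ n ∈ range (N + 1), (-((n : ℚ) + β)) ^ (N - n) * N.choose n * c n)
    (hh : ∀ N, a N = ∑ n ∈ range (N + 1), ((M + n).ascFactorial (N - n) : ℚ) * N.choose n * h n)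
    (hT : ∀ n, T ≤ n → h n = 0) (F : PowerSeries ℚ)
    (hF0 : ∀ n < β, coeff n F = 0)
    (hF : ∀ m, coeff (m + β) F = c m / m.factorial) :
    F ∈ Algebra.adjoin ℚ {Yq, Zq} := by
  have hA : F.subst wS = X ^ β * PowerSeries.mk (fun N => a N / N.factorial) := by
    ext N
    rw [coeff_subst_wS, coeff_X_pow_mul']
    split_ifs with hN
    · obtain ⟨m, rfl⟩ := Nat.exists_eq_add_of_le hN
      rw [show β + m + 1 = β + (m + 1) by ring, sum_range_add]
      rw [sum_eq_zero (s := range β), zero_add, coeff_mk, add_tsub_cancel_left, ha, sum_div]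
      · apply sum_congr rfl
        intro n hn
        have hn' : n ≤ m := Nat.lt_succ_iff.mp (mem_range.mp hn)
        rw [add_comm β n, hF, show β + m - (n + β) = m - n by omega, Nat.cast_choose ℚ hn']
        have := Nat.factorial_ne_zero m
        have := Nat.factorial_ne_zero n
        have := Nat.factorial_ne_zero (m - n)
        push_cast
        field_simp
      · intro n hn
        rw [hF0 n (mem_range.mp hn), zero_mul]
    · apply sum_eq_zero
      intro n hn
      have := mem_range.mp hn
      rw [hF0 n (by omega), zero_mul]
  have hB : (mk (fun N => a N / N.factorial) : PowerSeries ℚ) =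
      ∑ k ∈ range T, (h k / k.factorial) • (X ^ k * (mk 1 : PowerSeries ℚ) ^ (M + k)) := by
    ext N
    rw [coeff_mk, map_sum, hh, sum_div]
    have key : ∀ n, coeff N ((h n / n.factorial) • (X ^ n * (mk 1 : PowerSeries ℚ) ^ (M + n))) =
        if n ≤ N then ((M + n).ascFactorial (N - n) : ℚ) * N.choose n * h n / N.factorial
        else 0 := by
      intro n
      rw [coeff_smul, coeff_X_pow_mul']
      split_ifs with hn
      · obtain ⟨d, hd⟩ : ∃ d, M + n = d + 1 := ⟨M + n - 1, by omega⟩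
        rw [hd, mk_one_pow_eq_mk_choose_add, coeff_mk, Nat.ascFactorial_eq_factorial_mul_choose,
          Nat.cast_choose ℚ hn, Nat.choose_symm_add]
        have := Nat.factorial_ne_zero N
        have := Nat.factorial_ne_zero n
        have := Nat.factorial_ne_zero (N - n)
        push_cast
        rw [smul_eq_mul]
        field_simp
      · simp
    simp only [key]
    have e1 : ∑ n ∈ range (N + 1),
        ((M + n).ascFactorial (N - n) : ℚ) * N.choose n * h n / N.factorial =
        ∑ n ∈ range (N + 1 + T), if n ≤ N then
          ((M + n).ascFactorial (N - n) : ℚ) * N.choose n * h n / N.factorial else 0 := by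
      rw [sum_range_add _ (N + 1) T, sum_eq_zero (s := range T), add_zero]
      · apply sum_congr rfl
        intro n hn
        rw [if_pos (Nat.lt_succ_iff.mp (mem_range.mp hn))]
      · intro n hn
        rw [if_neg (by omega)]
    rw [e1, add_comm (N + 1) T, sum_range_add, sum_eq_zero (s := range (N + 1)), add_zero]
    intro n hn
    rw [hT _ (by omega)]
    simp
  have hFG : F = ∑ k ∈ range T, (h k / k.factorial) • (Yq ^ (β + k) * (1 + Zq) ^ (M + k)) := by
    apply subst_wS_injective
    rw [hA, hB]
    have hs : ∀ G : PowerSeries ℚ, G.subst wS = substAlgHom (R := ℚ) wS_hasSubst G := by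
      intro G; rw [coe_substAlgHom]
    rw [hs, map_sum, mul_sum]
    apply sum_congr rfl
    intro k hk
    rw [map_smul, map_mul, map_pow, map_pow, ← hs, ← hs, subst_Y, subst_Z, mul_smul_comm, pow_add]
    ring_nf
  rw [hFG]
  apply Subalgebra.sum_mem
  intro k hk
  have hY : Yq ∈ Algebra.adjoin ℚ {Yq, Zq} := Algebra.subset_adjoin (by simp)
  have hZ : Zq ∈ Algebra.adjoin ℚ {Yq, Zq} := Algebra.subset_adjoin (by simp)
  exact Subalgebra.smul_mem _ (mul_mem (pow_mem hY _) (pow_mem (add_mem (one_mem _) hZ) _)) _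

end BracketAux

namespace BracketAux

open MvPolynomial Finset

/-- Linear functional on polynomials attached to a bracket, cut off at cardinality `N`. -/
noncomputable def Lf (B : Multiset ℕ → ℚ) (N : ℕ) : MvPolynomial ℕ ℚ →ₗ[ℚ] ℚ :=
  (MvPolynomial.basisMonomials ℕ ℚ).constr ℚ fun m =>
    if Multiset.card (Finsupp.toMultiset m) ≤ N then B (Finsupp.toMultiset m) else 0

lemma Lf_monomial (B : Multiset ℕ → ℚ) (N : ℕ) (m : ℕ →₀ ℕ) (a : ℚ) :
    Lf B N (monomial m a) = a *
      if Multiset.card (Finsupp.toMultiset m) ≤ N then B (Finsupp.toMultiset m) else 0 := by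
  have h : monomial m a = a • (MvPolynomial.basisMonomials ℕ ℚ) m := by
    rw [coe_basisMonomials, smul_monomial, smul_eq_mul, mul_one]
  rw [h, map_smul, Lf, Module.Basis.constr_basis, smul_eq_mul]

/-- The lowering derivation. -/
noncomputable def lowD : Derivation ℚ (MvPolynomial ℕ ℚ) (MvPolynomial ℕ ℚ) :=
  mkDerivation ℚ fun d => if d = 0 then 0 else X (d - 1)

lemma toMultiset_sub_single (m : ℕ →₀ ℕ) (d : ℕ) :
    Finsupp.toMultiset (m - Finsupp.single d 1) = (Finsupp.toMultiset m).erase d := by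
  ext e
  rw [Finsupp.count_toMultiset]
  by_cases h : e = d
  · subst h
    simp
  · rw [Multiset.count_erase_of_ne h, Finsupp.count_toMultiset]
    simp [Ne.symm h]

lemma toMultiset_single_add (m : ℕ →₀ ℕ) (d : ℕ) :
    Finsupp.toMultiset (Finsupp.single d 1 + m) = d ::ₘ (Finsupp.toMultiset m) := by
  rw [map_add, Finsupp.toMultiset_single, one_smul, Multiset.singleton_add]

lemma Lf_X_mul_monomial (B : Multiset ℕ → ℚ) (N : ℕ) (d : ℕ) (m : ℕ →₀ ℕ) (a : ℚ) :
    Lf B N (X d * monomial m a) = a *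
      if Multiset.card (Finsupp.toMultiset m) + 1 ≤ N then B (d ::ₘ Finsupp.toMultiset m)
      else 0 := by
  rw [X, monomial_mul, one_mul, Lf_monomial, toMultiset_single_add, Multiset.card_cons]

lemma induct_homog {n : ℕ} {P : MvPolynomial ℕ ℚ} (hP : P.IsHomogeneous n)
    (L₁ L₂ : MvPolynomial ℕ ℚ →ₗ[ℚ] ℚ)
    (h : ∀ m : ℕ →₀ ℕ, Multiset.card (Finsupp.toMultiset m) = n →
      ∀ a, L₁ (monomial m a) = L₂ (monomial m a)) : L₁ P = L₂ P := by
  rw [P.as_sum, map_sum, map_sum]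
  apply sum_congr rfl
  intro m hm
  apply h
  have := hP (mem_support_iff.mp hm)
  rw [Finsupp.card_toMultiset, ← this]
  simp [Finsupp.weight_apply, Finsupp.sum]

lemma Lf_string {B : Multiset ℕ → ℚ} {p : ℕ}
    (hstr : ∀ m : Multiset ℕ, p ≤ Multiset.card m → StringRelAt B m)
    {n N : ℕ} (hpn : p ≤ n) (hnN : n + 1 ≤ N) {P : MvPolynomial ℕ ℚ} (hP : P.IsHomogeneous n) :
    Lf B N (X 0 * P) = Lf B N (lowD P) := by
  refine induct_homog hP ((Lf B N).comp (LinearMap.mulLeft ℚ (X 0)))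
    ((Lf B N).comp lowD.toLinearMap) ?_
  intro m hm a
  simp only [LinearMap.comp_apply, LinearMap.mulLeft_apply]
  rw [Lf_X_mul_monomial, hm, if_pos hnN, hstr _ (by omega)]
  change _ = Lf B N (lowD (monomial m a))
  rw [lowD, mkDerivation_monomial, map_smul, smul_eq_mul, Finsupp.sum, map_sum]
  congr 1
  rw [Finset.sum_multiset_map_count, Finsupp.toFinset_toMultiset]
  apply sum_congr rfl
  intro d hd
  have hd1 : d ∈ Finsupp.toMultiset m := (Finsupp.mem_toMultiset m d).mpr hd
  have hpos := Multiset.card_pos_iff_exists_mem.mpr ⟨d, hd1⟩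
  rw [Finsupp.count_toMultiset]
  split_ifs with h0
  · simp
  · rw [smul_eq_mul, mul_comm, Lf_X_mul_monomial, toMultiset_sub_single,
      Multiset.card_erase_of_mem hd1, if_pos (by rw [Nat.pred_eq_sub_one]; omega), nsmul_eq_mul]

lemma Lf_dilaton {g : ℕ} (hg : 2 ≤ g) {B : Multiset ℕ → ℚ} {p : ℕ}
    (hdil : ∀ m : Multiset ℕ, p ≤ Multiset.card m → DilatonRelAt g B m)
    {n N : ℕ} (hpn : p ≤ n) (hnN : n + 1 ≤ N) {P : MvPolynomial ℕ ℚ} (hP : P.IsHomogeneous n) :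
    Lf B N (X 1 * P) = ((2 * g - 2 + n : ℕ) : ℚ) * Lf B N P := by
  refine induct_homog hP ((Lf B N).comp (LinearMap.mulLeft ℚ (X 1)))
    (((2 * g - 2 + n : ℕ) : ℚ) • (Lf B N)) ?_
  intro m hm a
  simp only [LinearMap.comp_apply, LinearMap.mulLeft_apply, LinearMap.smul_apply]
  rw [Lf_X_mul_monomial, hm, if_pos hnN, hdil _ (by omega), Lf_monomial, hm, if_pos (by omega),
    smul_eq_mul]
  push_cast [Nat.cast_sub (show 2 ≤ 2 * g by omega)]
  ring

lemma Lf_dilaton_pow {g : ℕ} (hg : 2 ≤ g) {B : Multiset ℕ → ℚ} {p : ℕ}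
    (hdil : ∀ m : Multiset ℕ, p ≤ Multiset.card m → DilatonRelAt g B m)
    {n N : ℕ} (hpn : p ≤ n) (i : ℕ) (hnN : n + i ≤ N) {P : MvPolynomial ℕ ℚ}
    (hP : P.IsHomogeneous n) :
    Lf B N (X 1 ^ i * P) = ((2 * g - 2 + n).ascFactorial i : ℚ) * Lf B N P := by
  induction i with
  | zero => simp
  | succ i ih =>
    have h1 : (X 1 ^ i * P : MvPolynomial ℕ ℚ).IsHomogeneous (i + n) := by
      simpa using ((isHomogeneous_X ℚ 1).pow i).mul hP
    rw [pow_succ', mul_assoc, Lf_dilaton hg hdil (by omega) (by omega) h1, ih (by omega),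
      Nat.ascFactorial_succ]
    push_cast
    ring

/-- The ideal killed by the functional. -/
lemma Lf_vanish {g : ℕ} (hg : 2 ≤ g) {B : Multiset ℕ → ℚ} (hdeg : NonnegDegree g B)
    {N d : ℕ} (hd : 3 * g - 3 + N < d) {P : MvPolynomial ℕ ℚ}
    (hP : P ∈ Ideal.span {(X d : MvPolynomial ℕ ℚ)}) : Lf B N P = 0 := by
  obtain ⟨Q, rfl⟩ := Ideal.mem_span_singleton.mp hP
  induction Q using MvPolynomial.induction_on' with
  | monomial m a =>
    rw [Lf_X_mul_monomial]
    split_ifs with h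
    · rw [hdeg, mul_zero]
      rw [Multiset.card_cons, Multiset.sum_cons]
      push_cast
      have : (0 : ℤ) ≤ ((Finsupp.toMultiset m).sum : ℕ) := by positivity
      push_cast at this
      omega
    · simp
  | add p q hp hq =>
    rw [mul_add, map_add, hp (Ideal.mem_span_singleton.mpr ⟨_, rfl⟩),
      hq (Ideal.mem_span_singleton.mpr ⟨_, rfl⟩), add_zero]

/-- `P` is an eigenvector of the lowering derivation modulo `J`. -/
def Eig (J : Ideal (MvPolynomial ℕ ℚ)) (α : ℚ) (P : MvPolynomial ℕ ℚ) : Prop :=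
  lowD P - α • P ∈ J

lemma Eig.mul {J : Ideal (MvPolynomial ℕ ℚ)} {α β : ℚ} {P Q : MvPolynomial ℕ ℚ}
    (hP : Eig J α P) (hQ : Eig J β Q) : Eig J (α + β) (P * Q) := by
  unfold Eig at *
  have : lowD (P * Q) - (α + β) • (P * Q) =
      Q * (lowD P - α • P) + P * (lowD Q - β • Q) := by
    rw [Derivation.leibniz]
    simp only [smul_eq_C_mul, smul_eq_mul, map_add]
    ring
  rw [this]
  exact J.add_mem (J.mul_mem_left _ hP) (J.mul_mem_left _ hQ)

lemma Eig.one (J : Ideal (MvPolynomial ℕ ℚ)) : Eig J 0 1 := by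
  simp [Eig]

lemma Eig.prod {J : Ideal (MvPolynomial ℕ ℚ)} {ι : Type*} (s : Finset ι) (α : ι → ℚ)
    (P : ι → MvPolynomial ℕ ℚ) (h : ∀ i ∈ s, Eig J (α i) (P i)) :
    Eig J (∑ i ∈ s, α i) (∏ i ∈ s, P i) := by
  classical
  induction s using Finset.induction_on with
  | empty => simpa using Eig.one J
  | insert i s hi ih =>
    rw [sum_insert hi, prod_insert hi]
    exact (h i (mem_insert_self _ _)).mul (ih fun j hj => h j (mem_insert_of_mem hj))

lemma Eig.pow {J : Ideal (MvPolynomial ℕ ℚ)} {α : ℚ} {P : MvPolynomial ℕ ℚ} (h : Eig J α P)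
    (n : ℕ) : Eig J (n * α) (P ^ n) := by
  simpa using Eig.prod (range n) (fun _ => α) (fun _ => P) (fun _ _ => h)

lemma lowD_X_zero : lowD (X 0) = 0 := by
  rw [lowD, mkDerivation_X, if_pos rfl]

lemma Eig.X_zero (J : Ideal (MvPolynomial ℕ ℚ)) : Eig J 0 (X 0) := by
  simp [Eig, lowD_X_zero]

/-- Truncated geometric insertion `Σ_{d<K} w^d X_d`. -/
noncomputable def geo (K : ℕ) (w : ℚ) : MvPolynomial ℕ ℚ := ∑ d ∈ range K, (w ^ d) • X d

lemma geo_homog (K : ℕ) (w : ℚ) : (geo K w).IsHomogeneous 1 := by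
  unfold geo
  apply IsHomogeneous.sum
  intro d hd
  rw [smul_eq_C_mul]
  simpa using (isHomogeneous_C ℕ (w ^ d)).mul (isHomogeneous_X ℚ d)

lemma Eig.geo (K : ℕ) (w : ℚ) : Eig (Ideal.span {X K}) w (geo (K + 1) w) := by
  unfold Eig
  have h : lowD (BracketAux.geo (K + 1) w) - w • BracketAux.geo (K + 1) w =
      C (- w ^ (K + 1)) * X K := by
    have h1 : lowD (BracketAux.geo (K + 1) w) = w • BracketAux.geo K w := by
      unfold BracketAux.geo
      rw [map_sum, sum_range_succ', smul_sum]
      simp only [Derivation.map_smul, lowD_X_zero, smul_zero, add_zero]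
      apply sum_congr rfl
      intro d hd
      rw [lowD, mkDerivation_X, if_neg (by omega), Nat.add_sub_cancel, smul_smul, pow_succ']
    rw [h1]
    unfold BracketAux.geo
    rw [sum_range_succ, smul_add, smul_smul, ← pow_succ', sub_add_cancel_left, map_neg, neg_mul,
      smul_eq_C_mul]
  rw [h]
  exact Ideal.mul_mem_left _ _ (Ideal.mem_span_singleton_self _)

lemma Lf_string_pow {g : ℕ} (hg : 2 ≤ g) {B : Multiset ℕ → ℚ} (hdeg : NonnegDegree g B) {p : ℕ}
    (hstr : ∀ m : Multiset ℕ, p ≤ Multiset.card m → StringRelAt B m)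
    {n N K : ℕ} (hK : 3 * g - 3 + N < K) (hpn : p ≤ n) {P : MvPolynomial ℕ ℚ}
    (hP : P.IsHomogeneous n) {α : ℚ} (hE : Eig (Ideal.span {X K}) α P)
    (i : ℕ) (hnN : n + i ≤ N) :
    Lf B N (X 0 ^ i * P) = α ^ i * Lf B N P := by
  induction i with
  | zero => simp
  | succ i ih =>
    have h1 : (X 0 ^ i * P : MvPolynomial ℕ ℚ).IsHomogeneous (i + n) := by
      simpa using ((isHomogeneous_X ℚ 0).pow i).mul hP
    have h2 := ((Eig.X_zero (Ideal.span {X K})).pow i).mul hE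
    rw [mul_zero, zero_add] at h2
    have h3 := Lf_vanish hg hdeg hK h2
    rw [map_sub, map_smul, sub_eq_zero] at h3
    rw [pow_succ', mul_assoc, Lf_string hstr (by omega) (by omega) h1, h3, ih (by omega),
      smul_eq_mul, pow_succ']
    ring

/-- The raw sum over all tuples. -/
noncomputable def cN (g : ℕ) (B : Multiset ℕ → ℚ) (w : ℕ → ℚ) (n : ℕ) : ℚ :=
  ∑ d ∈ (Fintype.piFinset fun _ : Fin n => range (3 * g - 3 + n + 1)).filter
      (fun d => ∑ i, d i ≤ 3 * g - 3 + n),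
    (∏ i : Fin n, w i ^ d i) * B (List.ofFn d : Multiset ℕ)

lemma Lf_prod_geo {g : ℕ} (hg : 2 ≤ g) {B : Multiset ℕ → ℚ} (hdeg : NonnegDegree g B)
    (w : ℕ → ℚ) {n N K : ℕ} (hn : n ≤ N) (hK : 3 * g - 3 + N < K) :
    Lf B N (∏ i ∈ range n, geo K (w i)) = cN g B w n := by
  rw [← Fin.prod_univ_eq_prod_range (fun i => geo K (w i)) n]
  unfold geo
  rw [prod_univ_sum, map_sum, cN]
  have h1 : ∀ d : Fin n → ℕ, Lf B N (∏ i : Fin n, (w i ^ d i) • X (d i)) =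
      (∏ i : Fin n, w i ^ d i) * B (List.ofFn d : Multiset ℕ) := by
    intro d
    rw [prod_smul, map_smul, smul_eq_mul]
    have hm : ∏ i, (X (d i) : MvPolynomial ℕ ℚ) = monomial (∑ i, Finsupp.single (d i) 1) 1 := by
      rw [monomial_sum_one]
      rfl
    have ht : Finsupp.toMultiset (∑ i, Finsupp.single (d i) 1) = (List.ofFn d : Multiset ℕ) := by
      rw [map_sum]
      simp only [Finsupp.toMultiset_single, one_smul]
      rw [← Fin.univ_val_map, Finset.sum]
      have := Multiset.sum_map_singleton ((univ : Finset (Fin n)).val.map d)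
      rw [Multiset.map_map] at this
      exact this
    rw [hm, Lf_monomial, ht, one_mul, if_pos (by simpa using hn)]
  simp only [h1]
  symm
  apply sum_subset
  · intro d hd
    simp only [mem_filter, Fintype.mem_piFinset, mem_range] at hd ⊢
    intro i
    have := hd.1 i
    omega
  · intro d hd hd2
    have h2 : 3 * g - 3 + n < ∑ i, d i := by
      by_contra hc
      apply hd2
      simp only [mem_filter, Fintype.mem_piFinset, mem_range]
      refine ⟨fun i => ?_, by omega⟩
      have := single_le_sum (f := d) (fun _ _ => Nat.zero_le _) (mem_univ i)
      omega
    rw [hdeg, mul_zero]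
    rw [Multiset.coe_card, List.length_ofFn, Multiset.sum_coe, List.sum_ofFn]
    omega

end BracketAux

namespace BracketAux

open MvPolynomial Finset

lemma binom_L (L : MvPolynomial ℕ ℚ →ₗ[ℚ] ℚ) (x y s : MvPolynomial ℕ ℚ) (r : ℚ) (n : ℕ) :
    L ((x + r • y) ^ n * s) =
      ∑ k ∈ range (n + 1), r ^ (n - k) * n.choose k * L (y ^ (n - k) * (x ^ k * s)) := by
  rw [add_pow, sum_mul, map_sum]
  apply sum_congr rfl
  intro k hk
  rw [← smul_eq_mul (r ^ (n - k) * _), ← map_smul]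
  congr 1
  simp only [smul_eq_C_mul, map_mul, map_pow, mul_pow, map_natCast]
  ring

/-- All monomials have weight at least `t`. -/
def IsLow (t : ℕ) (P : MvPolynomial ℕ ℚ) : Prop :=
  ∀ m, coeff m P ≠ 0 → t ≤ (Finsupp.toMultiset m).sum

lemma IsLow.mul {t u : ℕ} {P Q : MvPolynomial ℕ ℚ} (hP : IsLow t P) (hQ : IsLow u Q) :
    IsLow (t + u) (P * Q) := by
  classical
  intro m hm
  rw [coeff_mul] at hm
  obtain ⟨x, hx, hne⟩ := exists_ne_zero_of_sum_ne_zero hm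
  rw [← mem_antidiagonal.mp hx, map_add, Multiset.sum_add]
  exact add_le_add (hP _ (left_ne_zero_of_mul hne)) (hQ _ (right_ne_zero_of_mul hne))

lemma IsLow.zero (P : MvPolynomial ℕ ℚ) : IsLow 0 P := fun _ _ => Nat.zero_le _

lemma IsLow.pow {t : ℕ} {P : MvPolynomial ℕ ℚ} (hP : IsLow t P) (n : ℕ) :
    IsLow (n * t) (P ^ n) := by
  induction n with
  | zero => simpa using IsLow.zero _
  | succ n ih =>
    rw [pow_succ, Nat.succ_mul]
    exact ih.mul hP

lemma isLow_geo (K : ℕ) : IsLow 2 (geo (K + 2) 1 - X 0 - X 1) := by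
  classical
  have h : geo (K + 2) 1 - X 0 - X 1 = ∑ d ∈ range K, (X (d + 2) : MvPolynomial ℕ ℚ) := by
    unfold geo
    rw [sum_range_succ', sum_range_succ']
    simp only [one_pow, one_smul, zero_add]
    ring
  rw [h]
  intro m hm
  rw [coeff_sum] at hm
  obtain ⟨d, hd, hne⟩ := exists_ne_zero_of_sum_ne_zero hm
  rw [coeff_X', ne_eq, ite_eq_right_iff] at hne
  push Not at hne
  rw [← hne.1]
  simp

lemma Lf_low {g : ℕ} (hg : 2 ≤ g) {B : Multiset ℕ → ℚ} (hdeg : NonnegDegree g B)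
    {N n t : ℕ} {P : MvPolynomial ℕ ℚ} (hP : P.IsHomogeneous n) (hl : IsLow t P)
    (ht : 3 * g - 3 + n < t) : Lf B N P = 0 := by
  rw [P.as_sum, map_sum]
  apply sum_eq_zero
  intro m hm
  have h1 := hl m (mem_support_iff.mp hm)
  have h2 : Multiset.card (Finsupp.toMultiset m) = n := by
    have := hP (mem_support_iff.mp hm)
    rw [Finsupp.card_toMultiset, ← this]
    simp [Finsupp.weight_apply, Finsupp.sum]
  rw [Lf_monomial, hdeg, ite_self, mul_zero]
  rw [h2]
  omega

theorem main (g : ℕ) (hg : 2 ≤ g) (p : ℕ)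
    (B : Multiset ℕ → ℚ) (hdeg : NonnegDegree g B)
    (hstr : ∀ m : Multiset ℕ, p ≤ Multiset.card m → StringRelAt B m)
    (hdil : ∀ m : Multiset ℕ, p ≤ Multiset.card m → DilatonRelAt g B m)
    (b : ℕ → ℕ) (β : ℕ) (hβ : β = ∑ i ∈ range p, b i) (F : PowerSeries ℚ)
    (hF0 : ∀ n < β, PowerSeries.coeff n F = 0)
    (hF : ∀ m, PowerSeries.coeff (m + β) F =
      cN g B (fun i => if i < p then (b i : ℚ) else 1) (p + m) / m.factorial) :
    F ∈ Algebra.adjoin ℚ {Yq, Zq} := by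
  set w : ℕ → ℚ := fun i => if i < p then (b i : ℚ) else 1 with hw
  set c : ℕ → ℚ := fun m => cN g B w (p + m) with hc
  set M := 2 * g - 2 + p with hM
  set a : ℕ → ℚ := fun N =>
    ∑ n ∈ range (N + 1), (-((n : ℚ) + β)) ^ (N - n) * N.choose n * c n with ha
  set h : ℕ → ℚ := fun N =>
    ∑ n ∈ range (N + 1), (-1) ^ (N - n) * N.choose n *
      (((M + n).ascFactorial (N - n) : ℚ) * a n) with hh
  have hwβ : ∑ i ∈ range p, w i = β := by
    rw [hβ]
    push_cast
    apply sum_congr rfl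
    intro i hi
    rw [hw]
    exact if_pos (mem_range.mp hi)
  -- everything at level `E`
  have level : ∀ E : ℕ, ∃ (L : MvPolynomial ℕ ℚ →ₗ[ℚ] ℚ) (f s : MvPolynomial ℕ ℚ),
      f.IsHomogeneous 1 ∧ s.IsHomogeneous p ∧ IsLow 2 (f - X 1) ∧
      (∀ n ≤ E, L (f ^ n * s) = a n) ∧
      (∀ n i, ∀ P : MvPolynomial ℕ ℚ, n + i ≤ E → P.IsHomogeneous (n + p) →
        L (X 1 ^ i * P) = ((M + n).ascFactorial i : ℚ) * L P) ∧
      (∀ n t, ∀ P : MvPolynomial ℕ ℚ, P.IsHomogeneous n → IsLow t P → 3 * g - 3 + n < t →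
        L P = 0) := by
    intro E
    obtain ⟨K, hK⟩ : ∃ K, K + 1 = 3 * g - 3 + (p + E) + 1 := ⟨_, rfl⟩
    have hs : (∏ i ∈ range p, geo (K + 2) (w i)).IsHomogeneous p := by
      simpa using IsHomogeneous.prod (range p) (fun i => geo (K + 2) (w i)) (fun _ => 1)
        (fun i _ => geo_homog _ _)
    have hf := geo_homog (K + 2) 1
    refine ⟨Lf B (p + E), geo (K + 2) 1 - X 0, ∏ i ∈ range p, geo (K + 2) (w i),
      hf.sub (isHomogeneous_X ℚ 0), hs, isLow_geo K, ?_, ?_, ?_⟩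
    · intro n hn
      rw [show geo (K + 2) 1 - X 0 = geo (K + 2) 1 + (-1 : ℚ) • X 0 by
        rw [neg_one_smul, sub_eq_add_neg], binom_L, ha]
      apply sum_congr rfl
      intro k hk
      have hk' := mem_range.mp hk
      have hhom : (geo (K + 2) 1 ^ k * ∏ i ∈ range p, geo (K + 2) (w i)).IsHomogeneous
          (k + p) := by
        simpa using (hf.pow k).mul hs
      have hE : Eig (Ideal.span {X (K + 1)}) (k + β)
          (geo (K + 2) 1 ^ k * ∏ i ∈ range p, geo (K + 2) (w i)) := by
        have := ((Eig.geo (K + 1) 1).pow k).mul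
          (Eig.prod (range p) w (fun i => geo (K + 2) (w i)) (fun i _ => Eig.geo (K + 1) (w i)))
        rwa [mul_one, hwβ] at this
      rw [Lf_string_pow hg hdeg hstr (by omega) (by omega) hhom hE (n - k) (by omega)]
      have hck : Lf B (p + E) (geo (K + 2) 1 ^ k * ∏ i ∈ range p, geo (K + 2) (w i)) = c k := by
        rw [hc]
        dsimp only
        rw [← Lf_prod_geo hg hdeg w (N := p + E) (K := K + 2) (by omega) (by omega),
          prod_range_add, mul_comm]
        congr 2
        rw [prod_congr rfl (g := fun _ => geo (K + 2) 1), prod_const, card_range]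
        intro i hi
        rw [hw]
        simp
      rw [hck, neg_pow ((k : ℚ) + β)]
      ring
    · intro n i P hni hP
      rw [Lf_dilaton_pow hg hdil (by omega) i (by omega) hP, hM]
      congr 3
      omega
    · intro n t P hP hl ht
      exact Lf_low hg hdeg hP hl ht
  have hhL : ∀ E, ∀ (L : MvPolynomial ℕ ℚ →ₗ[ℚ] ℚ) (f s : MvPolynomial ℕ ℚ),
      f.IsHomogeneous 1 → s.IsHomogeneous p → 
      (∀ n ≤ E, L (f ^ n * s) = a n) →
      (∀ n i, ∀ P : MvPolynomial ℕ ℚ, n + i ≤ E → P.IsHomogeneous (n + p) →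
        L (X 1 ^ i * P) = ((M + n).ascFactorial i : ℚ) * L P) → 
      ∀ n ≤ E, L ((f - X 1) ^ n * s) = h n := by
    intro E L f s hf hs h1 h2 n hn
    rw [show f - X 1 = f + (-1 : ℚ) • X 1 by rw [neg_one_smul, sub_eq_add_neg], binom_L, hh]
    apply sum_congr rfl
    intro k hk
    have hk' := mem_range.mp hk
    rw [h2 k (n - k) _ (by omega) (by simpa using (hf.pow k).mul hs), h1 k (by omega)]
  refine series_part β M (3 * g - 3 + p + 1) (by omega) c a h (fun N => rfl) ?_ ?_ F hF0 hF
  · intro N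
    obtain ⟨L, f, s, hf, hs, -, h1, h2, -⟩ := level N
    have h3 := hhL N L f s hf hs h1 h2
    rw [← h1 N le_rfl]
    conv_lhs => rw [show f = (f - X 1) + (1 : ℚ) • X 1 by rw [one_smul, sub_add_cancel]]
    rw [binom_L]
    apply sum_congr rfl
    intro k hk
    have hk' := mem_range.mp hk
    rw [h2 k (N - k) _ (by omega)
      (by simpa using ((hf.sub (isHomogeneous_X ℚ 1)).pow k).mul hs), h3 k (by omega), one_pow]
    ring
  · intro n hn
    obtain ⟨L, f, s, hf, hs, hl, h1, h2, h4⟩ := level n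
    rw [← hhL n L f s hf hs h1 h2 n le_rfl]
    exact h4 (n + p) (n * 2) _ (by simpa using ((hf.sub (isHomogeneous_X ℚ 1)).pow n).mul hs)
      (by simpa using (hl.pow n).mul (IsLow.zero s)) (by omega)

end BracketAux

/-- Let `g ≥ 2`, `p ≥ 0`, and let `B` be a genus-`g` bracket of nonnegative degree
satisfying the string and dilaton relations at every multiset of cardinality `≥ p`.
Let `b₁, …, b_p` be positive integers and `r = Σ (bᵢ − 1)`.  Then
`F(q) = Σ_{n ≥ p+r} (qⁿ/(n−p−r)!) Σ_{(d₁,…,d_{n−r}) ∈ ℕ^{n−r}, Σdᵢ ≤ 3g−3+(n−r)}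
  b₁^{d₁} ⋯ b_p^{d_p} · B({d₁,…,d_{n−r}})`
lies in `𝒜 = ℚ[Y,Z]`.  (The factor `b₁^{d₁}⋯b_p^{d_p}` is encoded as the product over
all `i < n−r` of `bᵢ^{dᵢ}` for `i < p` and `1^{dᵢ}` otherwise, which agrees with it
since `p ≤ n−r` for all `n ≥ p+r`.) -/
theorem bracket_series_mem_adjoin_general (g : ℕ) (hg : 2 ≤ g) (p : ℕ)
    (B : Multiset ℕ → ℚ) (hdeg : NonnegDegree g B)
    (hstr : ∀ m : Multiset ℕ, p ≤ Multiset.card m → StringRelAt B m)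
    (hdil : ∀ m : Multiset ℕ, p ≤ Multiset.card m → DilatonRelAt g B m)
    (b : ℕ → ℕ) (hb : ∀ i < p, 0 < b i) (r : ℕ)
    (hr : r = ∑ i ∈ Finset.range p, (b i - 1)) :
    (PowerSeries.mk fun n =>
        if n < p + r then 0 else
        (1 / ((n - p - r).factorial : ℚ)) *
          ∑ d ∈ (Fintype.piFinset fun _ : Fin (n - r) =>
              Finset.range (3 * g - 3 + (n - r) + 1)).filter
              (fun d => ∑ i, d i ≤ 3 * g - 3 + (n - r)),
            (∏ i : Fin (n - r), (if (i : ℕ) < p then (b i : ℚ) else 1) ^ d i) *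
              B (List.ofFn d : Multiset ℕ)) ∈
      Algebra.adjoin ℚ {Yq, Zq} := by
  have hβ : p + r = ∑ i ∈ Finset.range p, b i := by
    have h1 : ∑ i ∈ Finset.range p, b i = ∑ i ∈ Finset.range p, ((b i - 1) + 1) := by
      apply Finset.sum_congr rfl
      intro i hi
      have := hb i (Finset.mem_range.mp hi)
      omega
    rw [h1, Finset.sum_add_distrib, ← hr]
    simp [add_comm]
  refine BracketAux.main g hg p B hdeg hstr hdil b (p + r) hβ _ ?_ ?_
  · intro n hn
    rw [PowerSeries.coeff_mk, if_pos hn]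
  · intro m
    rw [PowerSeries.coeff_mk, if_neg (by omega), show m + (p + r) - p - r = m by omega,
      show m + (p + r) - r = p + m by omega, BracketAux.cN]
    ring
end

section
/- The algebra 𝒜 is spanned over ℚ, as a ℚ-vector space, by the power series 1, the series Σ_{n≥1} (n^{n+k}/n!) q^n for all integers k ∈ ℤ (where n^{n+k} is the rational number n^{n+k}, well defined since n ≥ 1), and the series Σ_{n≥1} (n^k A_n/n!) q^n for all natural numbers k ∈ ℕ. That is, 𝒜 equals the ℚ-linear span of this set of power series. -/
/-- `Aₙ = Σ_{p+s=n, p,s ≥ 1} (n!/(p!·s!)) pᵖ sˢ`, as a rational number. -/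
noncomputable def Aseq (n : ℕ) : ℚ :=
  ∑ p ∈ Finset.Ioo 0 n,
    (n.factorial : ℚ) / (p.factorial * (n - p).factorial) * p ^ p * (n - p) ^ (n - p)

open PowerSeries in
/-- `q d/dq`. -/
noncomputable def Dq : Derivation ℚ (PowerSeries ℚ) (PowerSeries ℚ) :=
  (PowerSeries.X : PowerSeries ℚ) • PowerSeries.derivative ℚ

lemma coeff_Dq (f : PowerSeries ℚ) (n : ℕ) :
    PowerSeries.coeff n (Dq f) = n * PowerSeries.coeff n f := by
  have h : Dq f = PowerSeries.X * PowerSeries.derivative ℚ f := rfl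
  rw [h]
  cases n with
  | zero => simp
  | succ n =>
    rw [PowerSeries.coeff_succ_X_mul, PowerSeries.coeff_derivative]
    push_cast; ring

lemma Dq_inj {f g : PowerSeries ℚ} (h : Dq f = Dq g)
    (h0 : PowerSeries.coeff 0 f = PowerSeries.coeff 0 g) : f = g := by
  ext n
  rcases Nat.eq_zero_or_pos n with rfl | hn
  · exact h0
  · have := congrArg (PowerSeries.coeff n) h
    rw [coeff_Dq, coeff_Dq] at this
    exact mul_left_cancel₀ (by positivity) this

/-- coefficients of Y times n! -/
def yy (p : ℕ) : ℚ := if p = 0 then 0 else (p : ℚ) ^ (p - 1)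

lemma abel_inner (m N : ℕ) (h : m ≤ N) :
    ∑ p ∈ Finset.range (N + 1), (m.choose p : ℚ) * (yy p * (-(p : ℚ)) ^ (m - p)) =
      if m = 1 then 1 else 0 := by
  have h1 : ∑ p ∈ Finset.range (N + 1), (m.choose p : ℚ) * (yy p * (-(p : ℚ)) ^ (m - p))
      = ∑ p ∈ Finset.range (m + 1), (m.choose p : ℚ) * (yy p * (-(p : ℚ)) ^ (m - p)) := by
    symm
    apply Finset.sum_subset
    · intro x; simp only [Finset.mem_range]; omega
    · intro x _ hx
      simp only [Finset.mem_range] at hx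
      rw [Nat.choose_eq_zero_of_lt (by omega)]; simp
  rw [h1]
  rcases m with _ | _ | m
  · simp [yy]
  · simp [Finset.sum_range_succ, yy]
  · have h2 := congrFun (fwdDiff_iter_pow_eq_zero_of_lt (R := ℚ) (show m + 1 < m + 2 by omega)) 0
    rw [fwdDiff_iter_eq_sum_shift] at h2
    simp only [Pi.zero_apply] at h2
    rw [if_neg (by omega), ← h2]
    apply Finset.sum_congr rfl
    intro p hp
    simp only [Finset.mem_range] at hp
    rcases Nat.eq_zero_or_pos p with rfl | hp0
    · simp [yy]
    · have e : m + 1 = (p - 1) + (m + 1 + 1 - p) := by omega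
      simp only [zero_add, nsmul_eq_mul, mul_one, zsmul_eq_mul]
      rw [yy, if_neg (by omega), show ((p : ℚ)) ^ (m + 1) = p ^ (p - 1) * p ^ (m + 1 + 1 - p) by
        rw [← pow_add, ← e], neg_pow]
      push_cast
      ring

lemma choose_swap (n p i : ℕ) :
    (n.choose p : ℚ) * ((n - p).choose i) = n.choose i * ((n - i).choose p) := by
  by_cases h : p + i ≤ n
  · have := Nat.choose_mul (n := n) (k := p + i) (s := p) (by omega)
    have h2 := Nat.choose_mul (n := n) (k := p + i) (s := i) (by omega)
    have h3 : (p + i).choose p = (p + i).choose i := Nat.choose_symm_add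
    rw [Nat.add_sub_cancel_left] at this
    rw [Nat.add_sub_cancel] at h2
    rw [h3] at this
    exact_mod_cast this.symm.trans h2
  · rcases lt_or_ge n p with hp | hp
    · rw [Nat.choose_eq_zero_of_lt hp, Nat.choose_eq_zero_of_lt (show n - i < p by omega)]; simp
    · rw [Nat.choose_eq_zero_of_lt (show n - p < i by omega)]
      rcases lt_or_ge n i with hi | hi
      · rw [Nat.choose_eq_zero_of_lt hi]; simp
      · rw [Nat.choose_eq_zero_of_lt (show n - i < p by omega)]; simp

lemma abel_id (n : ℕ) (hn : n ≠ 0) :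
    ∑ p ∈ Finset.range (n + 1), (n.choose p : ℚ) * (yy p * ((n - p : ℕ) : ℚ) ^ (n - p)) =
      (n : ℚ) ^ n := by
  have h1 : ∀ p ∈ Finset.range (n + 1),
      (n.choose p : ℚ) * (yy p * ((n - p : ℕ) : ℚ) ^ (n - p)) =
      ∑ i ∈ Finset.range (n + 1), (n.choose i : ℚ) * n ^ i *
        (((n - i).choose p : ℚ) * (yy p * (-(p : ℚ)) ^ (n - i - p))) := by
    intro p hp
    simp only [Finset.mem_range] at hp
    have : ((n - p : ℕ) : ℚ) ^ (n - p) = ∑ i ∈ Finset.range (n + 1),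
        (n : ℚ) ^ i * (-(p : ℚ)) ^ (n - p - i) * ((n - p).choose i) := by
      rw [Nat.cast_sub (by omega), sub_eq_add_neg, add_pow]
      apply Finset.sum_subset
      · intro x; simp only [Finset.mem_range]; omega
      · intro x _ hx
        simp only [Finset.mem_range] at hx
        rw [Nat.choose_eq_zero_of_lt (by omega)]; simp
    rw [this, Finset.mul_sum, Finset.mul_sum]
    apply Finset.sum_congr rfl
    intro i _
    rw [Nat.sub_right_comm n i p]
    linear_combination (yy p * n ^ i * (-(p : ℚ)) ^ (n - p - i)) * choose_swap n p i
  rw [Finset.sum_congr rfl h1, Finset.sum_comm]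
  simp_rw [← Finset.mul_sum]
  rw [Finset.sum_eq_single (n - 1)]
  · rw [abel_inner _ _ (by omega), if_pos (by omega), ← Nat.choose_symm (by omega),
      show n - (n - 1) = 1 by omega, Nat.choose_one_right, mul_one, ← pow_succ',
      show n - 1 + 1 = n by omega]
  · intro i hi hne
    simp only [Finset.mem_range] at hi
    rw [abel_inner _ _ (by omega), if_neg (by omega), mul_zero]
  · intro h; simp only [Finset.mem_range] at h; omega

lemma YW : Yq * (1 + Zq) = Zq := by
  ext n
  rw [PowerSeries.coeff_mul,
    Finset.Nat.sum_antidiagonal_eq_sum_range_succ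
      (fun i j => PowerSeries.coeff i Yq * PowerSeries.coeff j (1 + Zq))]
  have hW : ∀ m, PowerSeries.coeff m (1 + Zq) = (m : ℚ) ^ m / m.factorial := by
    intro m
    rcases eq_or_ne m 0 with rfl | hm
    · simp [Zq]
    · simp [Zq, PowerSeries.coeff_one, hm]
  have hY : ∀ m, PowerSeries.coeff m Yq = yy m / m.factorial := by
    intro m
    simp only [Yq, yy, PowerSeries.coeff_mk]
    split_ifs <;> simp
  rcases eq_or_ne n 0 with rfl | hn
  · simp [hY, yy, Zq]
  have hZ : PowerSeries.coeff n Zq = (n : ℚ) ^ n / n.factorial := by simp [Zq, hn]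
  rw [hZ, ← abel_id n hn, Finset.sum_div]
  apply Finset.sum_congr rfl
  intro p hp
  simp only [Finset.mem_range] at hp
  rw [hW, hY, Nat.cast_choose ℚ (show p ≤ n by omega)]
  have := Nat.factorial_ne_zero n
  have := Nat.factorial_ne_zero p
  have := Nat.factorial_ne_zero (n - p)
  field_simp

noncomputable def Fq (k : ℤ) : PowerSeries ℚ := PowerSeries.mk fun n =>
  if n = 0 then 0 else (n : ℚ) ^ ((n : ℤ) + k) / n.factorial

noncomputable def Gq (k : ℕ) : PowerSeries ℚ := PowerSeries.mk fun n =>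
  if n = 0 then 0 else (n : ℚ) ^ k * Aseq n / n.factorial

lemma DF (k : ℤ) : Dq (Fq k) = Fq (k + 1) := by
  ext n
  rw [coeff_Dq]
  rcases eq_or_ne n 0 with rfl | hn
  · simp [Fq]
  · have : (n : ℚ) ≠ 0 := by exact_mod_cast hn
    simp only [Fq, PowerSeries.coeff_mk, if_neg hn]
    rw [← add_assoc, zpow_add_one₀ this]; ring

lemma DG (k : ℕ) : Dq (Gq k) = Gq (k + 1) := by
  ext n
  rw [coeff_Dq]
  rcases eq_or_ne n 0 with rfl | hn
  · simp [Gq]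
  · simp only [Gq, PowerSeries.coeff_mk, if_neg hn]
    ring

lemma F0 : Fq 0 = Zq := by
  ext n
  simp [Fq, Zq]

lemma Fm1 : Fq (-1) = Yq := by
  ext n
  rcases eq_or_ne n 0 with rfl | hn
  · simp [Fq, Yq]
  · simp only [Fq, Yq, PowerSeries.coeff_mk, if_neg hn]
    rw [show (n : ℤ) + -1 = ((n - 1 : ℕ) : ℤ) by omega, zpow_natCast]

lemma G0 : Gq 0 = Zq * Zq := by
  ext n
  rw [PowerSeries.coeff_mul,
    Finset.Nat.sum_antidiagonal_eq_sum_range_succ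
      (fun i j => PowerSeries.coeff i Zq * PowerSeries.coeff j Zq)]
  rcases eq_or_ne n 0 with rfl | hn
  · simp [Gq, Zq]
  have hs : Finset.Ioo 0 n ⊆ Finset.range n.succ := by
    intro x; simp only [Finset.mem_range, Finset.mem_Ioo]; omega
  rw [← Finset.sum_subset hs]
  · simp only [Gq, PowerSeries.coeff_mk, if_neg hn, Aseq, pow_zero, one_mul]
    rw [Finset.sum_div]
    apply Finset.sum_congr rfl
    intro p hp
    simp only [Finset.mem_Ioo] at hp
    simp only [Zq, PowerSeries.coeff_mk]
    rw [if_neg (by omega), if_neg (by omega), Nat.cast_sub (by omega)]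
    have := Nat.factorial_ne_zero n
    have := Nat.factorial_ne_zero p
    have := Nat.factorial_ne_zero (n - p)
    field_simp
  · intro x hx hx'
    simp only [Finset.mem_range, Finset.mem_Ioo] at hx hx'
    have : x = 0 ∨ n - x = 0 := by omega
    rcases this with h | h <;> simp [Zq, h]

lemma DY : Dq Yq = Zq := by rw [← Fm1, DF, ← F0]; norm_num

lemma DZ : Dq Zq = (1 + Zq) ^ 2 * Zq := by
  have h := congrArg Dq YW
  rw [Derivation.leibniz, map_add, Derivation.map_one_eq_zero, DY] at h
  simp only [smul_eq_mul, zero_add] at h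
  have h2 := YW
  -- h : Y * DZ + (1+Z) * Z = DZ
  linear_combination (-(1 + Zq)) * h + Dq Zq * h2

lemma cY : PowerSeries.coeff 0 Yq = 0 := by simp [Yq]

lemma cF (k : ℤ) : PowerSeries.coeff 0 (Fq k) = 0 := by simp [Fq]

lemma DYpow (j : ℕ) : Dq (Yq ^ (j + 1)) = ((j + 1 : ℕ) : ℚ) • (Yq ^ j * Zq) := by
  rw [Derivation.leibniz_pow, DY, Nat.cast_smul_eq_nsmul]
  simp

lemma DYint (j : ℕ) : Dq (((j + 1 : ℕ) : ℚ)⁻¹ • Yq ^ (j + 1) -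
    ((j + 2 : ℕ) : ℚ)⁻¹ • Yq ^ (j + 2)) = Yq ^ (j + 1) := by
  rw [map_sub, Derivation.map_smul, Derivation.map_smul, DYpow, DYpow, inv_smul_smul₀ (by positivity),
    inv_smul_smul₀ (by positivity)]
  linear_combination (-Yq ^ j) * YW

lemma cYint (j : ℕ) : PowerSeries.coeff 0 (((j + 1 : ℕ) : ℚ)⁻¹ • Yq ^ (j + 1) -
    ((j + 2 : ℕ) : ℚ)⁻¹ • Yq ^ (j + 2)) = 0 := by
  have h := cY
  simp only [PowerSeries.coeff_zero_eq_constantCoeff, PowerSeries.coeff_zero_eq_constantCoeff_apply] at h ⊢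
  simp [h]

lemma Ypow_mem (j : ℕ) :
    Yq ^ (j + 1) ∈ Submodule.span ℚ (Set.range fun k : ℕ => Fq (-(k : ℤ) - 1)) := by
  set T := Submodule.span ℚ (Set.range fun k : ℕ => Fq (-(k : ℤ) - 1)) with hT
  have hint : ∀ f ∈ T, ∃ g ∈ T, Dq g = f ∧ PowerSeries.coeff 0 g = 0 := by
    intro f hf
    induction hf using Submodule.span_induction with
    | mem x hx =>
      obtain ⟨k, rfl⟩ := hx
      refine ⟨Fq (-((k + 1 : ℕ) : ℤ) - 1), Submodule.subset_span ⟨k + 1, rfl⟩, ?_, cF _⟩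
      rw [DF]; congr 1; push_cast; ring
    | zero => exact ⟨0, T.zero_mem, by simp, by simp⟩
    | add x y _ _ hx hy =>
      obtain ⟨a, ha, ha1, ha2⟩ := hx
      obtain ⟨b, hb, hb1, hb2⟩ := hy
      exact ⟨a + b, T.add_mem ha hb, by rw [map_add, ha1, hb1], by rw [map_add, ha2, hb2, add_zero]⟩
    | smul c x _ hx =>
      obtain ⟨a, ha, ha1, ha2⟩ := hx
      exact ⟨c • a, T.smul_mem c ha, by rw [Derivation.map_smul, ha1],
        by rw [map_smul, ha2, smul_zero]⟩
  induction j with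
  | zero => rw [zero_add, pow_one, ← Fm1]; exact Submodule.subset_span ⟨0, by simp⟩
  | succ j ih =>
    obtain ⟨g, hg, hg1, hg2⟩ := hint _ ih
    have e := Dq_inj (hg1.trans (DYint j).symm) (hg2.trans (cYint j).symm)
    have : Yq ^ (j + 1 + 1) = ((j + 2 : ℕ) : ℚ) • (((j + 1 : ℕ) : ℚ)⁻¹ • Yq ^ (j + 1) - g) := by
      rw [e, sub_sub_cancel, smul_inv_smul₀ (by positivity)]
    rw [this]
    exact T.smul_mem _ (T.sub_mem (T.smul_mem _ ih) hg)

lemma Fneg_mem (k : ℕ) :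
    Fq (-(k : ℤ) - 1) ∈ Submodule.span ℚ (Set.range fun j : ℕ => Yq ^ (j + 1)) := by
  set T := Submodule.span ℚ (Set.range fun j : ℕ => Yq ^ (j + 1)) with hT
  have hint : ∀ f ∈ T, ∃ g ∈ T, Dq g = f ∧ PowerSeries.coeff 0 g = 0 := by
    intro f hf
    induction hf using Submodule.span_induction with
    | mem x hx =>
      obtain ⟨k, rfl⟩ := hx
      exact ⟨_, T.sub_mem (T.smul_mem _ (Submodule.subset_span ⟨k, rfl⟩))
        (T.smul_mem _ (Submodule.subset_span ⟨k + 1, rfl⟩)), DYint k, cYint k⟩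
    | zero => exact ⟨0, T.zero_mem, by simp, by simp⟩
    | add x y _ _ hx hy =>
      obtain ⟨a, ha, ha1, ha2⟩ := hx
      obtain ⟨b, hb, hb1, hb2⟩ := hy
      exact ⟨a + b, T.add_mem ha hb, by rw [map_add, ha1, hb1], by rw [map_add, ha2, hb2, add_zero]⟩
    | smul c x _ hx =>
      obtain ⟨a, ha, ha1, ha2⟩ := hx
      exact ⟨c • a, T.smul_mem c ha, by rw [Derivation.map_smul, ha1],
        by rw [map_smul, ha2, smul_zero]⟩
  induction k with
  | zero => exact Submodule.subset_span ⟨0, by simp [Fm1]⟩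
  | succ k ih =>
    obtain ⟨g, hg, hg1, hg2⟩ := hint _ ih
    have : Fq (-((k + 1 : ℕ) : ℤ) - 1) = g := by
      apply Dq_inj
      · rw [hg1, DF]; congr 1; push_cast; ring
      · rw [cF, hg2]
    rw [this]; exact hg

lemma adjoin_D {f : PowerSeries ℚ} (hf : f ∈ Algebra.adjoin ℚ {Yq, Zq}) :
    Dq f ∈ Algebra.adjoin ℚ {Yq, Zq} := by
  have hZ : Zq ∈ Algebra.adjoin ℚ {Yq, Zq} := Algebra.subset_adjoin (by simp)
  induction hf using Algebra.adjoin_induction with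
  | mem x hx =>
    rcases hx with rfl | rfl
    · rw [DY]; exact hZ
    · rw [DZ]; exact mul_mem (pow_mem (add_mem (one_mem _) hZ) 2) hZ
  | algebraMap r => rw [Derivation.map_algebraMap]; exact zero_mem _
  | add x y _ _ hx hy => rw [map_add]; exact add_mem hx hy
  | mul x y hx' hy' hx hy =>
    rw [Derivation.leibniz]; exact add_mem (mul_mem hx' hy) (mul_mem hy' hx)

/-- the span on the right-hand side -/
noncomputable def Sq : Submodule ℚ (PowerSeries ℚ) := Submodule.span ℚ
        ({(1 : PowerSeries ℚ)} ∪ {f | ∃ k : ℤ, f = Fq k} ∪ {f | ∃ k : ℕ, f = Gq k})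

lemma one_S : (1 : PowerSeries ℚ) ∈ Sq := Submodule.subset_span (by simp)
lemma F_S (k : ℤ) : Fq k ∈ Sq := Submodule.subset_span (Or.inl (Or.inr ⟨k, rfl⟩))
lemma G_S (k : ℕ) : Gq k ∈ Sq := Submodule.subset_span (Or.inr ⟨k, rfl⟩)

lemma S_D {f : PowerSeries ℚ} (hf : f ∈ Sq) : Dq f ∈ Sq := by
  unfold Sq at hf
  induction hf using Submodule.span_induction with
  | mem x hx =>
    rcases hx with (rfl | ⟨k, rfl⟩) | ⟨k, rfl⟩
    · rw [Derivation.map_one_eq_zero]; exact Sq.zero_mem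
    · rw [DF]; exact F_S _
    · rw [DG]; exact G_S _
  | zero => rw [map_zero]; exact Sq.zero_mem
  | add x y _ _ hx hy => rw [map_add]; exact Sq.add_mem hx hy
  | smul c x _ hx => rw [Derivation.map_smul]; exact Sq.smul_mem c hx

lemma Ypow_S (j : ℕ) : Yq ^ j ∈ Sq := by
  cases j with
  | zero => rw [pow_zero]; exact one_S
  | succ j =>
    refine (Submodule.span_le.2 ?_ : _ ≤ Sq) (Ypow_mem j)
    rintro _ ⟨k, rfl⟩; exact F_S _

lemma DWpow (m : ℕ) : Dq ((1 + Zq) ^ (m + 1)) =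
    ((m + 1 : ℕ) : ℚ) • ((1 + Zq) ^ (m + 3) - (1 + Zq) ^ (m + 2)) := by
  rw [Derivation.leibniz_pow, map_add, Derivation.map_one_eq_zero, DZ, Nat.cast_smul_eq_nsmul]
  congr 1
  simp only [smul_eq_mul, Nat.add_sub_cancel]
  ring

lemma Wpow_S (j : ℕ) : (1 + Zq) ^ j ∈ Sq ∧ (1 + Zq) ^ (j + 1) ∈ Sq ∧ (1 + Zq) ^ (j + 2) ∈ Sq := by
  have hZ : Zq ∈ Sq := F0 ▸ F_S 0
  induction j with
  | zero =>
    refine ⟨by simpa using one_S, by simpa using Sq.add_mem one_S hZ, ?_⟩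
    have : (1 + Zq) ^ (0 + 2) = 1 + (Zq + Zq) + Gq 0 := by rw [G0]; ring
    rw [this]
    exact Sq.add_mem (Sq.add_mem one_S (Sq.add_mem hZ hZ)) (G_S 0)
  | succ j ih =>
    obtain ⟨_, h1, h2⟩ := ih
    refine ⟨h1, h2, ?_⟩
    have : (1 + Zq) ^ (j + 1 + 2) =
        ((j + 1 : ℕ) : ℚ)⁻¹ • Dq ((1 + Zq) ^ (j + 1)) + (1 + Zq) ^ (j + 2) := by
      rw [DWpow, inv_smul_smul₀ (by positivity)]; ring
    rw [this]
    exact Sq.add_mem (Sq.smul_mem _ (S_D h1)) h2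

/-- span of powers of Y and of 1+Z -/
noncomputable def Vq : Submodule ℚ (PowerSeries ℚ) :=
  Submodule.span ℚ ((Set.range fun j : ℕ => Yq ^ j) ∪ (Set.range fun j : ℕ => (1 + Zq) ^ j))

lemma Y_V (j : ℕ) : Yq ^ j ∈ Vq := Submodule.subset_span (Or.inl ⟨j, rfl⟩)
lemma W_V (j : ℕ) : (1 + Zq) ^ j ∈ Vq := Submodule.subset_span (Or.inr ⟨j, rfl⟩)

lemma WY_V (j : ℕ) : (1 + Zq) * Yq ^ j ∈ Vq := by
  induction j with
  | zero => simpa using W_V 1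
  | succ j ih =>
    have : (1 + Zq) * Yq ^ (j + 1) = (1 + Zq) * Yq ^ j - Yq ^ j := by
      linear_combination (Yq ^ j) * YW
    rw [this]; exact Vq.sub_mem ih (Y_V j)

lemma YV {f : PowerSeries ℚ} (hf : f ∈ Vq) : Yq * f ∈ Vq := by
  unfold Vq at hf
  induction hf using Submodule.span_induction with
  | mem x hx =>
    rcases hx with ⟨k, rfl⟩ | ⟨k, rfl⟩
    · simpa [pow_succ'] using Y_V (k + 1)
    · cases k with
      | zero => simpa using Y_V 1
      | succ k =>
        have : Yq * (1 + Zq) ^ (k + 1) = (1 + Zq) ^ (k + 1) - (1 + Zq) ^ k := by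
          linear_combination ((1 + Zq) ^ k) * YW
        simp only [this]; exact Vq.sub_mem (W_V _) (W_V _)
  | zero => rw [mul_zero]; exact Vq.zero_mem
  | add x y _ _ hx hy => rw [mul_add]; exact Vq.add_mem hx hy
  | smul c x _ hx => rw [mul_smul_comm]; exact Vq.smul_mem c hx

lemma WV {f : PowerSeries ℚ} (hf : f ∈ Vq) : (1 + Zq) * f ∈ Vq := by
  unfold Vq at hf
  induction hf using Submodule.span_induction with
  | mem x hx =>
    rcases hx with ⟨k, rfl⟩ | ⟨k, rfl⟩
    · exact WY_V k
    · simpa only [pow_succ'] using W_V (k + 1)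
  | zero => rw [mul_zero]; exact Vq.zero_mem
  | add x y _ _ hx hy => rw [mul_add]; exact Vq.add_mem hx hy
  | smul c x _ hx => rw [mul_smul_comm]; exact Vq.smul_mem c hx

lemma adjoin_V {f : PowerSeries ℚ} (hf : f ∈ Algebra.adjoin ℚ {Yq, Zq}) :
    ∀ v ∈ Vq, f * v ∈ Vq := by
  induction hf using Algebra.adjoin_induction with
  | mem x hx =>
    intro v hv
    rcases hx with rfl | rfl
    · exact YV hv
    · have := Vq.sub_mem (WV hv) hv
      rwa [add_mul, one_mul, add_sub_cancel_left] at this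
  | algebraMap r => intro v hv; rw [← Algebra.smul_def]; exact Vq.smul_mem r hv
  | add x y _ _ hx hy => intro v hv; rw [add_mul]; exact Vq.add_mem (hx v hv) (hy v hv)
  | mul x y _ _ hx hy => intro v hv; rw [mul_assoc]; exact hx _ (hy v hv)

lemma Fnat_mem (k : ℕ) : Fq k ∈ Algebra.adjoin ℚ {Yq, Zq} := by
  induction k with
  | zero => rw [Nat.cast_zero, F0]; exact Algebra.subset_adjoin (by simp)
  | succ k ih => rw [Nat.cast_succ, ← DF]; exact adjoin_D ih

lemma Gnat_mem (k : ℕ) : Gq k ∈ Algebra.adjoin ℚ {Yq, Zq} := by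
  induction k with
  | zero =>
    rw [G0]
    exact mul_mem (Algebra.subset_adjoin (by simp)) (Algebra.subset_adjoin (by simp))
  | succ k ih => rw [← DG]; exact adjoin_D ih

lemma Fint_mem (k : ℤ) : Fq k ∈ Algebra.adjoin ℚ {Yq, Zq} := by
  rcases le_or_gt 0 k with h | h
  · lift k to ℕ using h
    exact Fnat_mem k
  · obtain ⟨m, rfl⟩ : ∃ m : ℕ, k = -(m : ℤ) - 1 := ⟨(-k - 1).toNat, by omega⟩
    refine (Submodule.span_le.2 ?_ :
      _ ≤ Subalgebra.toSubmodule (Algebra.adjoin ℚ {Yq, Zq})) (Fneg_mem m)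
    rintro _ ⟨j, rfl⟩
    exact pow_mem (Algebra.subset_adjoin (by simp)) (j + 1)

/-- The algebra `𝒜 = ℚ[Y, Z]` is spanned, as a `ℚ`-vector space, by `1`, the series
`Σ_{n≥1} (n^{n+k}/n!) qⁿ` for `k ∈ ℤ`, and the series `Σ_{n≥1} (n^k·Aₙ/n!) qⁿ` for `k ∈ ℕ`. -/
theorem adjoin_YZ_eq_span :
    Subalgebra.toSubmodule (Algebra.adjoin ℚ {Yq, Zq}) =
      Submodule.span ℚ
        ({(1 : PowerSeries ℚ)} ∪
         {f | ∃ k : ℤ, f = PowerSeries.mk fun n =>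
            if n = 0 then 0 else (n : ℚ) ^ ((n : ℤ) + k) / n.factorial} ∪
         {f | ∃ k : ℕ, f = PowerSeries.mk fun n =>
            if n = 0 then 0 else (n : ℚ) ^ k * Aseq n / n.factorial}) := by
  change _ = Sq
  apply le_antisymm
  · intro f hf
    have h := adjoin_V hf 1 (by simpa using Y_V 0)
    rw [mul_one] at h
    refine (Submodule.span_le.2 ?_ : Vq ≤ Sq) h
    rintro _ (⟨j, rfl⟩ | ⟨j, rfl⟩)
    · exact Ypow_S j
    · exact (Wpow_S j).1
  · refine Submodule.span_le.2 ?_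
    rintro _ ((rfl | ⟨k, rfl⟩) | ⟨k, rfl⟩)
    · exact one_mem (Algebra.adjoin ℚ {Yq, Zq})
    · exact Fint_mem k
    · exact Gnat_mem k
end

section
/- For every real number q with |q| < 1/e, the series Σ_{n≥1} (n^{n−1}/n!) q^n converges to a real number y such that y · e^{−y} = q; that is, there exists y ∈ ℝ with HasSum (n ↦ (n^{n−1}/n!) q^n) y and y·exp(−y) = q. Consequently, on the disc |q| < 1/e the function Y(q) is the inverse of the function y ↦ y/e^y. -/
open Real

noncomputable def treeC (n : ℕ) : ℝ := if n = 0 then 0 else (n : ℝ) ^ (n - 1) / n.factorial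

lemma treeC_nonneg (n : ℕ) : 0 ≤ treeC n := by
  unfold treeC; split_ifs <;> positivity

lemma treeC_le (n : ℕ) : treeC n ≤ Real.exp 1 ^ n := by
  unfold treeC
  split_ifs with h
  · positivity
  · have h1 : (1 : ℝ) ≤ n := by exact_mod_cast Nat.one_le_iff_ne_zero.mpr h
    have h2 : (n : ℝ) ^ n / n.factorial ≤ Real.exp n :=
      Real.pow_div_factorial_le_exp (n : ℝ) (by positivity) n
    rw [← Real.exp_nat_mul, mul_one]
    refine le_trans ?_ h2
    gcongr
    exact Nat.sub_le n 1

lemma treeC_summable (x : ℝ) (hx : |x| < 1 / Real.exp 1) :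
    Summable (fun n => treeC n * |x| ^ n) := by
  have h : Real.exp 1 * |x| < 1 := by
    rw [lt_div_iff₀ (Real.exp_pos 1)] at hx; linarith
  refine Summable.of_nonneg_of_le (fun n => mul_nonneg (treeC_nonneg n) (by positivity))
    (fun n => ?_) (summable_geometric_of_lt_one (by positivity) h)
  rw [mul_pow]
  gcongr
  exact treeC_le n

lemma treeC_summable' (x : ℝ) (hx : |x| < 1 / Real.exp 1) :
    Summable (fun n => treeC n * x ^ n) := by
  refine Summable.of_norm ?_
  simpa [abs_of_nonneg (treeC_nonneg _)] using treeC_summable x hx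

noncomputable def treeY (x : ℝ) : ℝ := ∑' n, treeC n * x ^ n

lemma treeY_analytic : AnalyticOnNhd ℝ treeY (Metric.ball 0 (1 / Real.exp 1)) := by
  set p := FormalMultilinearSeries.ofScalars ℝ treeC with hp
  have hr : ENNReal.ofReal (1 / Real.exp 1) ≤ p.radius := by
    refine p.le_radius_of_bound 1 (r := (1 / Real.exp 1).toNNReal) (fun n => ?_)
    rw [hp, FormalMultilinearSeries.ofScalars_norm, Real.norm_of_nonneg (treeC_nonneg n),
      Real.coe_toNNReal _ (by positivity)]
    calc _ ≤ Real.exp 1 ^ n * (1 / Real.exp 1) ^ n := by gcongr; exact treeC_le n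
      _ = 1 := by rw [← mul_pow]; simp
      _ ≤ 1 := le_rfl
  have hpos : 0 < p.radius := lt_of_lt_of_le (by simp [Real.exp_pos]) hr
  have h := (p.hasFPowerSeriesOnBall hpos).analyticOnNhd
  have he : p.sum = treeY := by
    ext x
    simp [FormalMultilinearSeries.sum, treeY, hp, mul_comm]
  rw [he] at h
  refine h.mono ?_
  rw [← Metric.eball_ofReal]
  exact Metric.eball_subset_eball hr

/-- The coefficient identity. -/
lemma treeC_antidiagonal (N : ℕ) :
    ∑ p ∈ Finset.HasAntidiagonal.antidiagonal N, treeC p.1 * ((-(p.1 : ℝ)) ^ p.2 / p.2.factorial)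
      = if N = 1 then 1 else 0 := by
  rcases N with _ | _ | N
  · simp [treeC]
  · simp [treeC, Finset.Nat.antidiagonal_succ]
  · rw [if_neg (by omega)]
    have h := congrFun (fwdDiff_iter_pow_eq_zero_of_lt (R := ℝ) (show N + 1 < N + 2 by omega)) 0
    rw [fwdDiff_iter_eq_sum_shift] at h
    rw [Finset.Nat.sum_antidiagonal_eq_sum_range_succ_mk]
    have h' := congrArg (fun t : ℝ => t / ((N + 2).factorial : ℝ)) h
    simp only [Pi.zero_apply, zero_div, Finset.sum_div] at h'
    rw [← h']
    refine Finset.sum_congr rfl fun k hk => ?_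
    have hk' : k ≤ N + 2 := by simpa [Nat.lt_succ_iff] using hk
    rcases Nat.eq_zero_or_pos k with rfl | hk0
    · simp [treeC]
    · rw [treeC, if_neg hk0.ne']
      simp only [zsmul_eq_mul, nsmul_eq_mul, mul_one, zero_add]
      push_cast
      rw [Nat.cast_choose ℝ hk', neg_pow]
      have e : (k : ℝ) ^ (N + 1) = (k : ℝ) ^ (k - 1) * (k : ℝ) ^ (N + 2 - k) := by
        rw [← pow_add]; congr 1; omega
      rw [e]
      have := Nat.factorial_ne_zero (N + 2)
      field_simp

lemma treeY_comp (y : ℝ) (hy : |y| * Real.exp |y| < 1 / Real.exp 1) :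
    treeY (y * Real.exp (-y)) = y := by
  let f : ℕ × ℕ → ℝ := fun p => treeC p.1 * y ^ p.1 * ((-(p.1 : ℝ) * y) ^ p.2 / p.2.factorial)
  have hexp : ∀ t : ℝ, HasSum (fun m : ℕ => t ^ m / m.factorial) (Real.exp t) := by
    intro t
    rw [Real.exp_eq_exp_ℝ]
    exact NormedSpace.expSeries_div_hasSum_exp t
  have hnorm : ∀ n m, ‖f (n, m)‖ = treeC n * |y| ^ n * ((n * |y|) ^ m / m.factorial) := by
    intro n m
    simp [f, abs_of_nonneg (treeC_nonneg n)]
  have hf : Summable f := by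
    refine Summable.of_norm ?_
    rw [summable_prod_of_nonneg (fun _ => norm_nonneg _)]
    simp only [hnorm]
    refine ⟨fun n => ((hexp _).mul_left _).summable, ?_⟩
    have := treeC_summable (|y| * Real.exp |y|) (by rwa [abs_of_nonneg (by positivity)])
    refine this.congr fun n => ?_
    rw [((hexp _).mul_left _).tsum_eq, abs_of_nonneg (by positivity), mul_pow, Real.exp_nat_mul]
    ring
  have h1 : HasSum (fun n => treeC n * (y * Real.exp (-y)) ^ n) (∑' p, f p) := by
    have h0 : ∀ n : ℕ, HasSum (fun m => f (n, m)) (treeC n * (y * Real.exp (-y)) ^ n) := by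
      intro n
      have := (hexp (-(n : ℝ) * y)).mul_left (treeC n * y ^ n)
      have e : treeC n * y ^ n * Real.exp (-(n : ℝ) * y)
          = treeC n * (y * Real.exp (-y)) ^ n := by
        rw [mul_pow, ← Real.exp_nat_mul]
        ring_nf
      rw [e] at this
      exact this
    exact hf.hasSum.prod_fiberwise h0
  have h2 : HasSum (fun N => if N = 1 then y else 0) (∑' p, f p) := by
    have := (Finset.HasAntidiagonal.sigmaAntidiagonalEquivProd.hasSum_iff.mpr hf.hasSum).sigma
      (fun N => hasSum_fintype _)
    convert this using 2 with N
    have := congrArg (fun t => t * y ^ N) (treeC_antidiagonal N)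
    simp only [Finset.sum_mul] at this
    rw [Finset.univ_eq_attach]
    trans ∑ p ∈ Finset.HasAntidiagonal.antidiagonal N, f p
    · trans (if N = 1 then 1 else 0) * y ^ N
      · split_ifs with h
        · simp [h]
        · simp
      · rw [← this]
        refine Finset.sum_congr rfl fun p hp => ?_
        rw [← Finset.HasAntidiagonal.mem_antidiagonal.mp hp, pow_add]
        simp only [f, mul_pow]
        ring
    · exact (Finset.sum_attach _ f).symm
  rw [treeY, h1.tsum_eq, ← h2.tsum_eq, tsum_ite_eq]

theorem hasSum_Y_inverse_of_abs_lt (q : ℝ) (hq : |q| < 1 / Real.exp 1) :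
    ∃ y : ℝ,
      HasSum (fun n : ℕ =>
        if n = 0 then 0 else (n : ℝ) ^ (n - 1) / n.factorial * q ^ n) y ∧
      y * Real.exp (-y) = q := by
  refine ⟨treeY q, ?_, ?_⟩
  · have h : HasSum (fun n => treeC n * q ^ n) (treeY q) := (treeC_summable' q hq).hasSum
    convert h using 2 with n
    unfold treeC; split_ifs <;> simp
  · have hev : (fun q => treeY q * Real.exp (-treeY q)) =ᶠ[nhds 0] (fun q => q) := by
      have hd : HasStrictDerivAt (fun y : ℝ => y * Real.exp (-y)) 1 0 := by
        have := (hasStrictDerivAt_id (0 : ℝ)).fun_mul (hasStrictDerivAt_id (0 : ℝ)).fun_neg.exp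
        simpa using this
      have hm := hd.map_nhds_eq one_ne_zero
      simp only [zero_mul] at hm
      unfold Filter.EventuallyEq
      rw [← hm, Filter.eventually_map]
      have hc : ContinuousAt (fun y : ℝ => |y| * Real.exp |y|) 0 := by fun_prop
      have := hc.eventually_lt (continuousAt_const (y := 1 / Real.exp 1)) (by simp [Real.exp_pos])
      filter_upwards [this] with y hy
      rw [treeY_comp y hy]
    have ha : AnalyticOnNhd ℝ (fun q => treeY q * Real.exp (-treeY q))
        (Metric.ball 0 (1 / Real.exp 1)) := by
      intro x hx
      exact (treeY_analytic x hx).mul ((treeY_analytic x hx).neg.rexp)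
    exact ha.eqOn_of_preconnected_of_eventuallyEq analyticOnNhd_id
      (convex_ball _ _).isPreconnected (z₀ := 0) (by simp [Real.exp_pos]) hev (by simpa using hq)
end

section
/- For every integer n ≥ 1, A_n = n! · Σ_{k=0}^{n−2} n^k/k! (for n = 1 the right-hand sum is empty and both sides equal 0). -/
open Finset in
theorem aux_diff (m : ℕ) :
    ∑ p ∈ range (m + 1), (-1 : ℚ) ^ (m - p) * (m.choose p : ℚ) * (p : ℚ) ^ m = m.factorial := by
  have h := congrFun (fwdDiff_iter_eq_factorial (R := ℚ) (n := m)) 0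
  rw [fwdDiff_iter_eq_sum_shift] at h
  simpa using h

theorem aux_choose (n p j : ℕ) (h : p + j ≤ n) :
    (n.choose p : ℚ) * ((n - p).choose j : ℚ) = n.choose j * (n - j).choose p := by
  obtain ⟨k, rfl⟩ := Nat.exists_eq_add_of_le h
  have e1 : p + j + k - p = j + k := by omega
  have e2 : p + j + k - j = p + k := by omega
  rw [e1, e2, Nat.cast_choose ℚ (by omega : p ≤ p + j + k),
    Nat.cast_choose ℚ (by omega : j ≤ p + j + k),
    Nat.cast_choose ℚ (by omega : j ≤ j + k), Nat.cast_choose ℚ (by omega : p ≤ p + k), e1, e2,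
    Nat.add_sub_cancel_left, Nat.add_sub_cancel_left]
  have := fun a : ℕ => (Nat.cast_ne_zero (R := ℚ)).2 a.factorial_ne_zero
  have h1 := this (j + k)
  have h2 := this (p + k)
  have h3 := this p
  have h4 := this j
  have h5 := this k
  field_simp

open Finset in
theorem aux_full (n : ℕ) :
    ∑ p ∈ range (n + 1), (n.choose p : ℚ) * (p : ℚ) ^ p * ((n : ℚ) - p) ^ (n - p)
      = ∑ j ∈ range (n + 1), (n.factorial : ℚ) * ((n : ℚ) ^ j / j.factorial) := by
  have h1 : ∀ p ∈ range (n + 1),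
      (n.choose p : ℚ) * (p : ℚ) ^ p * ((n : ℚ) - p) ^ (n - p)
      = ∑ j ∈ range (n + 1), (n.choose p : ℚ) * (p : ℚ) ^ p *
        ((n : ℚ) ^ j * (-(p : ℚ)) ^ (n - p - j) * ((n - p).choose j : ℚ)) := by
    intro p hp
    rw [sub_eq_add_neg, add_pow, mul_sum]
    apply sum_subset
    · intro j hj
      simp only [mem_range] at *
      omega
    · intro j _ hj
      simp only [mem_range] at hj
      rw [Nat.choose_eq_zero_of_lt (by omega : n - p < j)]
      simp
  rw [sum_congr rfl h1, sum_comm]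
  apply sum_congr rfl
  intro j hj
  have hj' : j ≤ n := by simp only [mem_range] at hj; omega
  have h2 : ∑ p ∈ range (n - j + 1), (n.choose p : ℚ) * (p : ℚ) ^ p *
        ((n : ℚ) ^ j * (-(p : ℚ)) ^ (n - p - j) * ((n - p).choose j : ℚ))
      = ∑ p ∈ range (n + 1), (n.choose p : ℚ) * (p : ℚ) ^ p *
        ((n : ℚ) ^ j * (-(p : ℚ)) ^ (n - p - j) * ((n - p).choose j : ℚ)) := by
    apply sum_subset
    · intro p hp
      simp only [mem_range] at *
      omega
    · intro p hp hp'
      simp only [mem_range] at hp hp'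
      rw [Nat.choose_eq_zero_of_lt (by omega : n - p < j)]
      simp
  rw [← h2]
  have h3 : ∀ p ∈ range (n - j + 1), (n.choose p : ℚ) * (p : ℚ) ^ p *
        ((n : ℚ) ^ j * (-(p : ℚ)) ^ (n - p - j) * ((n - p).choose j : ℚ))
      = (n.choose j : ℚ) * (n : ℚ) ^ j *
        ((-1 : ℚ) ^ (n - j - p) * ((n - j).choose p : ℚ) * (p : ℚ) ^ (n - j)) := by
    intro p hp
    simp only [mem_range] at hp
    have e : n - p - j = n - j - p := by omega
    have e2 : (p : ℚ) ^ (n - j) = (p : ℚ) ^ p * (p : ℚ) ^ (n - j - p) := by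
      rw [← pow_add]
      congr 1
      omega
    rw [e, e2, neg_pow]
    linear_combination ((p : ℚ) ^ p * (n : ℚ) ^ j * (-1) ^ (n - j - p) * (p : ℚ) ^ (n - j - p)) *
      aux_choose n p j (by omega)
  rw [sum_congr rfl h3, ← mul_sum, aux_diff, Nat.cast_choose ℚ hj']
  have h4 := (Nat.cast_ne_zero (R := ℚ)).2 (n - j).factorial_ne_zero
  have h5 := (Nat.cast_ne_zero (R := ℚ)).2 j.factorial_ne_zero
  field_simp

/-- For every `n ≥ 1`, `Aₙ = n! · Σ_{k=0}^{n-2} nᵏ/k!`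
(for `n = 1` the sum is empty and both sides are `0`). -/
theorem Aseq_eq_factorial_mul_sum (n : ℕ) (hn : 1 ≤ n) :
    Aseq n = (n.factorial : ℚ) * ∑ k ∈ Finset.range (n - 1), (n : ℚ) ^ k / k.factorial := by
  obtain ⟨m, rfl⟩ := Nat.exists_eq_add_of_le' hn
  have h := aux_full (m + 1)
  have hA : Aseq (m + 1) = ∑ p ∈ Finset.Ioo 0 (m + 1), ((m + 1).choose p : ℚ) * (p : ℚ) ^ p *
      (((m + 1 : ℕ) : ℚ) - p) ^ (m + 1 - p) := by
    unfold Aseq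
    apply Finset.sum_congr rfl
    intro p hp
    rw [Nat.cast_choose ℚ (Finset.mem_Ioo.1 hp).2.le]
  have hI : Finset.Ioo 0 (m + 1) = Finset.Ico 1 (m + 1) := by
    ext x
    simp only [Finset.mem_Ioo, Finset.mem_Ico]
    omega
  rw [Finset.sum_range_succ, Finset.range_eq_Ico, Finset.sum_eq_sum_Ico_succ_bot (by omega),
    Finset.sum_range_succ, Finset.sum_range_succ, ← Finset.mul_sum] at h
  rw [hA, hI, Nat.add_sub_cancel]
  have h4 := (Nat.cast_ne_zero (R := ℚ)).2 m.factorial_ne_zero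
  have h5 := (Nat.cast_ne_zero (R := ℚ)).2 (m + 1).factorial_ne_zero
  have e1 : ((m + 1).factorial : ℚ) * (((m + 1 : ℕ) : ℚ) ^ m / m.factorial)
      = ((m + 1 : ℕ) : ℚ) ^ (m + 1) := by
    rw [Nat.factorial_succ, Nat.cast_mul]
    field_simp
    ring
  have e2 : ((m + 1).factorial : ℚ) * (((m + 1 : ℕ) : ℚ) ^ (m + 1) / (m + 1).factorial)
      = ((m + 1 : ℕ) : ℚ) ^ (m + 1) := by
    field_simp
  rw [e1, e2] at h
  simp only [Nat.choose_zero_right, Nat.choose_self, Nat.cast_one, Nat.cast_zero, pow_zero,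
    sub_zero, Nat.sub_zero, one_mul, sub_self, Nat.sub_self, mul_one, zero_add] at h
  linarith
end

section
/- The sequence A_n satisfies A_n ∼ √(π/2) · n^{n+1/2} as n → ∞; that is, the quotient A_n / n^{n+1/2} tends to √(π/2) as n tends to infinity. Equivalently, A_n/n! ∼ (1/2)·e^n. -/
open Real Filter

/-- `Aₙ = Σ_{p+s=n, p,s ≥ 1} (n!/(p!·s!)) pᵖ sˢ`, as a real number. -/
noncomputable def AseqR (n : ℕ) : ℝ :=
  ∑ p ∈ Finset.Ioo 0 n,
    (n.factorial : ℝ) / (p.factorial * (n - p).factorial) * p ^ p * (n - p) ^ (n - p)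

/-- Normalised central binomial coefficients. -/
noncomputable def bseq (p : ℕ) : ℝ := (p.centralBinom : ℝ) / 4 ^ p

lemma bseq_pos (p : ℕ) : 0 < bseq p := by
  unfold bseq
  have : 0 < (p.centralBinom : ℝ) := by exact_mod_cast p.centralBinom_pos
  positivity

lemma bseq_succ (p : ℕ) : ((p : ℝ) + 1) * bseq (p + 1) = (p + 1 / 2) * bseq p := by
  unfold bseq
  have h : ((p : ℝ) + 1) * (p + 1).centralBinom = 2 * (2 * p + 1) * p.centralBinom := by
    exact_mod_cast p.succ_mul_centralBinom_succ
  rw [← mul_div_assoc, h, pow_succ]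
  field_simp
  ring

lemma bseq_half (n : ℕ) :
    2 * ∑ x ∈ Finset.HasAntidiagonal.antidiagonal n, (x.1 : ℝ) * (bseq x.1 * bseq x.2) =
      n * ∑ x ∈ Finset.HasAntidiagonal.antidiagonal n, bseq x.1 * bseq x.2 := by
  have h := Finset.Nat.sum_antidiagonal_swap (n := n)
    (f := fun x => (x.1 : ℝ) * (bseq x.1 * bseq x.2))
  simp only [Prod.fst_swap, Prod.snd_swap] at h
  rw [two_mul]
  nth_rewrite 1 [← h]
  rw [← Finset.sum_add_distrib, Finset.mul_sum]
  refine Finset.sum_congr rfl fun x hx => ?_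
  rw [Finset.HasAntidiagonal.mem_antidiagonal] at hx
  rw [← hx]
  push_cast
  ring

lemma bseq_conv (n : ℕ) : ∑ x ∈ Finset.HasAntidiagonal.antidiagonal n, bseq x.1 * bseq x.2 = 1 := by
  induction n with
  | zero => simp [bseq]
  | succ n ih =>
    have h1 := bseq_half (n + 1)
    have h2 := bseq_half n
    rw [Finset.Nat.sum_antidiagonal_succ] at h1
    have h3 : ∑ x ∈ Finset.HasAntidiagonal.antidiagonal n, ((x.1 + 1 : ℕ) : ℝ) * (bseq (x.1 + 1) * bseq x.2)
        = ∑ x ∈ Finset.HasAntidiagonal.antidiagonal n, (x.1 : ℝ) * (bseq x.1 * bseq x.2)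
          + 1 / 2 * ∑ x ∈ Finset.HasAntidiagonal.antidiagonal n, bseq x.1 * bseq x.2 := by
      rw [Finset.mul_sum, ← Finset.sum_add_distrib]
      refine Finset.sum_congr rfl fun x _ => ?_
      push_cast
      rw [← mul_assoc, bseq_succ]
      ring
    simp only [h3] at h1
    rw [ih] at h1 h2
    push_cast at h1
    have hn : ((n : ℝ) + 1) ≠ 0 := by positivity
    apply mul_left_cancel₀ hn
    linarith

open Stirling in
lemma bseq_eq (p : ℕ) (hp : p ≠ 0) :
    bseq p = stirlingSeq (2 * p) / (stirlingSeq p ^ 2) * (1 / √(p : ℝ)) := by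
  have hp' : (0 : ℝ) < p := by positivity
  have hf : (p.centralBinom : ℝ) = (2 * p).factorial / (p.factorial * p.factorial) := by
    rw [Nat.centralBinom_eq_two_mul_choose, Nat.cast_choose ℝ (by omega)]
    congr 4
    omega
  unfold bseq stirlingSeq
  rw [hf]
  have h1 : √(2 * ((2 * p : ℕ) : ℝ)) = 2 * √(p : ℝ) := by
    push_cast
    rw [show (2 : ℝ) * (2 * p) = 2 ^ 2 * p by ring, Real.sqrt_mul (by positivity),
      Real.sqrt_sq (by norm_num)]
  have h2 : √(2 * (p : ℝ)) ^ 2 = 2 * p := Real.sq_sqrt (by positivity)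
  have h3 : √(p : ℝ) * √(p : ℝ) = p := Real.mul_self_sqrt hp'.le
  have h4 : (((2 * p : ℕ) : ℝ) / exp 1) ^ (2 * p) = 4 ^ p * ((p / exp 1) ^ p) ^ 2 := by
    push_cast
    rw [mul_div_assoc, mul_pow, pow_mul, mul_comm 2 p, pow_mul]
    norm_num
  rw [h1, h4, div_pow _ _ 2, mul_pow _ _ 2, h2]
  have : (0 : ℝ) < (p / exp 1) ^ p := by positivity
  generalize ((p : ℝ) / exp 1) ^ p = y at *
  have hs : 0 < √(p : ℝ) := Real.sqrt_pos.2 hp'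
  have hfac : (0 : ℝ) < p.factorial := by positivity
  field_simp
  nlinarith [h3]

/-- The terms `pᵖ e⁻ᵖ / p!`, set to zero at `p = 0`. -/
noncomputable def aseq (p : ℕ) : ℝ :=
  if p = 0 then 0 else (p : ℝ) ^ p / p.factorial / exp p

open Stirling in
lemma aseq_eq (p : ℕ) :
    aseq p = bseq p * (stirlingSeq p / (√2 * stirlingSeq (2 * p))) := by
  rcases Nat.eq_zero_or_pos p with rfl | hp
  · simp [aseq]
  have hpos : ∀ m : ℕ, m ≠ 0 → 0 < stirlingSeq m := by
    intro m hm
    obtain ⟨k, rfl⟩ := Nat.exists_eq_succ_of_ne_zero hm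
    exact stirlingSeq'_pos k
  have h1 := hpos p (by omega)
  have h2 := hpos (2 * p) (by omega)
  have hp' : (0 : ℝ) < p := by positivity
  have hs : 0 < √(p : ℝ) := Real.sqrt_pos.2 hp'
  rw [bseq_eq p (by omega), aseq, if_neg (by omega)]
  have : stirlingSeq (2 * p) / stirlingSeq p ^ 2 * (1 / √(p : ℝ)) *
      (stirlingSeq p / (√2 * stirlingSeq (2 * p))) = 1 / (√2 * √(p : ℝ) * stirlingSeq p) := by
    field_simp
  rw [this, stirlingSeq, Real.sqrt_mul (by norm_num), div_pow, ← Real.exp_nat_mul, mul_one]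
  field_simp

lemma two_mul_tendsto : Tendsto (fun p : ℕ => 2 * p) atTop atTop :=
  tendsto_atTop_mono (fun p => by simp only [id]; omega) tendsto_id

lemma bseq_tendsto : Tendsto bseq atTop (nhds 0) := by
  have h := Stirling.tendsto_stirlingSeq_sqrt_pi
  have hpi : √π ^ 2 ≠ 0 := by positivity
  have h0 : Tendsto (fun p : ℕ => 1 / √(p : ℝ)) atTop (nhds 0) := by
    simp only [one_div]
    exact tendsto_inv_atTop_zero.comp
      (Real.tendsto_sqrt_atTop.comp tendsto_natCast_atTop_atTop)
  have := ((h.comp two_mul_tendsto).div (h.pow 2) hpi).mul h0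
  rw [mul_zero] at this
  refine this.congr' ?_
  filter_upwards [eventually_ne_atTop 0] with p hp
  rw [bseq_eq p hp]
  rfl

noncomputable def rseq (p : ℕ) : ℝ :=
  Stirling.stirlingSeq p / (√2 * Stirling.stirlingSeq (2 * p))

lemma rseq_tendsto : Tendsto rseq atTop (nhds (1 / √2)) := by
  have h := Stirling.tendsto_stirlingSeq_sqrt_pi
  have hpi : √π ≠ 0 := by positivity
  have := h.div ((h.comp two_mul_tendsto).const_mul √2) (by positivity)
  rw [show √π / (√2 * √π) = 1 / √2 by field_simp] at this
  exact this

/-- Toeplitz-type averaging. -/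
lemma toeplitz (d : ℕ → ℝ) (hd0 : ∀ p, 0 ≤ d p) (hd : Tendsto d atTop (nhds 0)) :
    Tendsto (fun n => ∑ x ∈ Finset.HasAntidiagonal.antidiagonal n, bseq x.1 * bseq x.2 * d x.1) atTop
      (nhds 0) := by
  rw [Metric.tendsto_atTop]
  intro ε hε
  obtain ⟨N, hN⟩ := eventually_atTop.1 (hd.eventually_lt_const (half_pos hε))
  have hfin : Tendsto (fun n => ∑ p ∈ Finset.range N, bseq p * d p * bseq (n - p)) atTop
      (nhds 0) := by
    have : Tendsto (fun n => ∑ p ∈ Finset.range N, bseq p * d p * bseq (n - p)) atTop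
      (nhds (∑ p ∈ Finset.range N, bseq p * d p * 0)) :=
      tendsto_finsetSum _ fun p _ =>
        (bseq_tendsto.comp (tendsto_sub_atTop_nat p)).const_mul _
    simpa using this
  obtain ⟨M, hM⟩ := eventually_atTop.1 (hfin.eventually_lt_const (half_pos hε))
  refine ⟨max M N, fun n hn => ?_⟩
  have hnM : M ≤ n := (le_max_left _ _).trans hn
  have hnN : N ≤ n := (le_max_right _ _).trans hn
  have hnn : 0 ≤ ∑ x ∈ Finset.HasAntidiagonal.antidiagonal n, bseq x.1 * bseq x.2 * d x.1 :=
    Finset.sum_nonneg fun x _ =>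
      mul_nonneg (mul_nonneg (bseq_pos _).le (bseq_pos _).le) (hd0 _)
  rw [Real.dist_eq, sub_zero, abs_of_nonneg hnn]
  have hle : ∑ x ∈ Finset.HasAntidiagonal.antidiagonal n, bseq x.1 * bseq x.2 * d x.1 ≤
      ∑ p ∈ Finset.range N, bseq p * d p * bseq (n - p) +
        ε / 2 * ∑ x ∈ Finset.HasAntidiagonal.antidiagonal n, bseq x.1 * bseq x.2 := by
    have hsub : Finset.range N ⊆ Finset.range (n + 1) := by
      intro x; simp only [Finset.mem_range]; omega
    have e1 : ∑ p ∈ Finset.range N, bseq p * d p * bseq (n - p) =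
        ∑ p ∈ Finset.range (n + 1), if p < N then bseq p * d p * bseq (n - p) else 0 := by
      rw [← Finset.sum_filter]
      congr 1
      ext x; simp only [Finset.mem_filter, Finset.mem_range]; omega
    rw [Finset.Nat.sum_antidiagonal_eq_sum_range_succ_mk,
      Finset.Nat.sum_antidiagonal_eq_sum_range_succ_mk, e1, Finset.mul_sum,
      ← Finset.sum_add_distrib]
    refine Finset.sum_le_sum fun p _ => ?_
    have hb : 0 < bseq p * bseq (n - p) := mul_pos (bseq_pos _) (bseq_pos _)
    split_ifs with h
    · have : 0 ≤ ε / 2 * (bseq p * bseq (n - p)) := by positivity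
      simp only
      nlinarith
    · have := (hN p (by omega)).le
      simp only
      nlinarith
  rw [bseq_conv] at hle
  have := hM n hnM
  linarith

lemma aseq_conv_tendsto :
    Tendsto (fun n => ∑ x ∈ Finset.HasAntidiagonal.antidiagonal n, aseq x.1 * aseq x.2) atTop
      (nhds (1 / 2)) := by
  obtain ⟨K, hK⟩ := rseq_tendsto.bddAbove_range
  have hK' : ∀ p, rseq p ≤ K := fun p => hK ⟨p, rfl⟩
  have hr0 : ∀ p, 0 ≤ rseq p := fun p => by
    unfold rseq Stirling.stirlingSeq; positivity
  set c : ℝ := 1 / √2 with hc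
  have hc0 : 0 ≤ c := by positivity
  have hcc : c * c = 1 / 2 := by
    rw [hc, div_mul_div_comm, Real.mul_self_sqrt (by norm_num)]; norm_num
  have hd : Tendsto (fun p => |rseq p - c|) atTop (nhds 0) := by
    have := (rseq_tendsto.sub_const c).abs
    rwa [← hc, sub_self, abs_zero] at this
  have hT := toeplitz _ (fun p => abs_nonneg _) hd
  have hT2 := hT.const_mul (K + c)
  rw [mul_zero] at hT2
  rw [tendsto_iff_norm_sub_tendsto_zero]
  refine squeeze_zero (fun _ => norm_nonneg _) (fun n => ?_) hT2
  have hsym := Finset.Nat.sum_antidiagonal_swap (n := n)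
    (f := fun x => bseq x.1 * bseq x.2 * |rseq x.1 - c|)
  simp only [Prod.fst_swap, Prod.snd_swap] at hsym
  have e : ∑ x ∈ Finset.HasAntidiagonal.antidiagonal n, aseq x.1 * aseq x.2 - 1 / 2 =
      ∑ x ∈ Finset.HasAntidiagonal.antidiagonal n, bseq x.1 * bseq x.2 * (rseq x.1 * rseq x.2 - c * c) := by
    have h1 : (1 / 2 : ℝ) = ∑ x ∈ Finset.HasAntidiagonal.antidiagonal n, bseq x.1 * bseq x.2 * (c * c) := by
      rw [← Finset.sum_mul, bseq_conv, hcc, one_mul]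
    rw [h1, ← Finset.sum_sub_distrib]
    refine Finset.sum_congr rfl fun x _ => ?_
    rw [aseq_eq, aseq_eq]
    change bseq x.1 * rseq x.1 * (bseq x.2 * rseq x.2) - _ = _
    ring
  rw [e]
  refine (norm_sum_le _ _).trans ?_
  rw [add_mul]
  nth_rewrite 2 [← hsym]
  rw [Finset.mul_sum, Finset.mul_sum, ← Finset.sum_add_distrib]
  refine Finset.sum_le_sum fun x _ => ?_
  have hb : 0 < bseq x.1 * bseq x.2 := mul_pos (bseq_pos _) (bseq_pos _)
  rw [norm_mul, Real.norm_eq_abs, Real.norm_eq_abs, abs_of_pos hb]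
  have key : |rseq x.1 * rseq x.2 - c * c| ≤ K * |rseq x.1 - c| + c * |rseq x.2 - c| := by
    rw [show rseq x.1 * rseq x.2 - c * c = rseq x.2 * (rseq x.1 - c) + c * (rseq x.2 - c) by ring]
    refine (abs_add_le _ _).trans ?_
    rw [abs_mul, abs_mul, abs_of_nonneg (hr0 _), abs_of_nonneg hc0]
    have := mul_le_mul_of_nonneg_right (hK' x.2) (abs_nonneg (rseq x.1 - c))
    linarith
  calc _ ≤ bseq x.1 * bseq x.2 * (K * |rseq x.1 - c| + c * |rseq x.2 - c|) :=
        mul_le_mul_of_nonneg_left key hb.le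
    _ = _ := by ring

lemma AseqR_eq (n : ℕ) :
    AseqR n / n.factorial / exp n = ∑ x ∈ Finset.HasAntidiagonal.antidiagonal n, aseq x.1 * aseq x.2 := by
  rw [Finset.Nat.sum_antidiagonal_eq_sum_range_succ_mk, AseqR, Finset.sum_div, Finset.sum_div]
  have hsub : Finset.Ioo 0 n ⊆ Finset.range (n + 1) := by
    intro x; simp only [Finset.mem_range, Finset.mem_Ioo]; omega
  rw [← Finset.sum_subset hsub]
  · refine Finset.sum_congr rfl fun p hp => ?_
    rw [Finset.mem_Ioo] at hp
    simp only [aseq]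
    rw [if_neg (by omega), if_neg (by omega), Nat.cast_sub hp.2.le, Real.exp_sub]
    have := Nat.factorial_pos n
    have := Nat.factorial_pos p
    have := Nat.factorial_pos (n - p)
    field_simp
  · intro p hp hp2
    simp only [Finset.mem_range, Finset.mem_Ioo] at hp hp2
    simp only [aseq]
    rcases Nat.eq_zero_or_pos p with h | h
    · simp [h]
    · simp [show n - p = 0 by omega]

/-- `Aₙ ∼ √(π/2) · n^{n+1/2}` as `n → ∞`; equivalently `Aₙ/n! ∼ (1/2)·eⁿ`. -/
theorem Aseq_asymptotic :
    Tendsto (fun n : ℕ => AseqR n / (n : ℝ) ^ ((n : ℝ) + 1 / 2)) atTop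
      (nhds (Real.sqrt (Real.pi / 2))) ∧
    Tendsto (fun n : ℕ => AseqR n / n.factorial / Real.exp n) atTop (nhds (1 / 2)) := by
  have h2 : Tendsto (fun n : ℕ => AseqR n / n.factorial / Real.exp n) atTop (nhds (1 / 2)) := by
    simp only [AseqR_eq]
    exact aseq_conv_tendsto
  refine ⟨?_, h2⟩
  have h := h2.mul (Stirling.tendsto_stirlingSeq_sqrt_pi.const_mul √2)
  have e : 1 / 2 * (√2 * √π) = √(π / 2) := by
    rw [Real.sqrt_div Real.pi_pos.le]
    have : √2 * √2 = (2 : ℝ) := Real.mul_self_sqrt (by norm_num)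
    have h0 : (0 : ℝ) < √2 := by positivity
    field_simp
    nlinarith
  rw [e] at h
  refine h.congr' ?_
  filter_upwards [eventually_gt_atTop 0] with n hn
  have hn' : (0 : ℝ) < n := by positivity
  rw [Real.rpow_add hn', Real.rpow_natCast, ← Real.sqrt_eq_rpow, Stirling.stirlingSeq,
    Real.sqrt_mul (by norm_num), div_pow, ← Real.exp_nat_mul, mul_one]
  have := Nat.factorial_pos n
  have hs : 0 < √(n : ℝ) := Real.sqrt_pos.2 hn'
  field_simp
end
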